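/- Let 𝔾 be a discrete quantum group of Kac type. If L∞(𝔾̂) is an injective von Neumann algebra, then 𝔾 is amenable. -/

import Mathlib

/-!
Common framework: an axiomatization of locally compact quantum groups (in the von Neumann
algebraic setting of Kustermans–Vaes) acting on a Hilbert space `H = L²(𝔾)`.

Since completed Hilbert space tensor products are not available, the tensor square
`H2 = L²(𝔾) ⊗ L²(𝔾)` is axiomatized: a Hilbert space together with a bilinear map
`tmul` with total range satisfying `⟪a ⊗ b, c ⊗ d⟫ = ⟪a, c⟫⟪b, d⟫`, the induced tensor
product of operators `tensorOp`, tensor products `funcTensor` of normal functionals,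
and the slice maps `sliceL = ω ⊗ id`, `sliceR = id ⊗ ω`.

Normal functionals (elements of the predual `B(H)_*`) are characterized concretely:
`ω(x) = ∑ ⟪ηₙ, x ξₙ⟫` with `∑‖ξₙ‖² , ∑‖ηₙ‖² < ∞`.

Membership of an operator `X` on `H2` in a spatial tensor product `P ⊗̄ Q` of von Neumann
algebras is encoded, via the commutation theorem, as: `X` commutes with all `a' ⊗ b'`
with `a' ∈ P'`, `b' ∈ Q'`.

A locally compact quantum group is recorded through its left regular co-representation
`W ∈ L∞(𝔾) ⊗̄ L∞(𝔾̂)` and right regular co-representation `V ∈ L∞(𝔾̂)' ⊗̄ L∞(𝔾)`,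
which implement the co-multiplication: `Δ(x) = W*(1 ⊗ x)W = V(x ⊗ 1)V*` for `x ∈ L∞(𝔾)`;
`Δ̄(x) := W*(1 ⊗ x)W` for arbitrary `x ∈ B(H)` is the canonical normal extension of `Δ`.
-/

noncomputable section

open scoped ComplexOrder ComplexInnerProductSpace

namespace LCQGNote

/-- The bounded operators `B(H)`. -/
abbrev B (H : Type*) [NormedAddCommGroup H] [InnerProductSpace ℂ H] : Type _ := H →L[ℂ] H

variable (H H2 : Type*)
  [NormedAddCommGroup H] [InnerProductSpace ℂ H] [CompleteSpace H]
  [NormedAddCommGroup H2] [InnerProductSpace ℂ H2] [CompleteSpace H2]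

/-- The vector functional `ω_{ξ,η} : x ↦ ⟨x ξ, η⟩` on `B(H)` (written here in the
Mathlib convention for inner products, which are conjugate-linear in the first slot). -/
def vecFunctional (ξ η : H) : B H →ₗ[ℂ] ℂ where
  toFun x := ⟪η, x ξ⟫
  map_add' x y := by simp [inner_add_right]
  map_smul' c x := by simp [inner_smul_right]

/-- A functional on `B(H)` is normal (σ-weakly continuous, i.e. belongs to the predual
`B(H)_*`) iff it has the form `x ↦ ∑ ⟪ηₙ, x ξₙ⟫` with `(ξₙ), (ηₙ)` square-summable. -/
def IsNormalFunctional (ω : B H →ₗ[ℂ] ℂ) : Prop :=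
  ∃ ξ η : ℕ → H, Summable (fun n => ‖ξ n‖ ^ 2) ∧ Summable (fun n => ‖η n‖ ^ 2) ∧
    ∀ x : B H, HasSum (fun n => ⟪η n, x (ξ n)⟫) (ω x)

/-- `φ` is a state of the von Neumann algebra `N ⊆ B(H)`: it is unital and positive on `N`.
(Functionals on `N` are encoded as functionals on `B(H)`; only the restriction to `N`
matters, by the Hahn–Banach extension theorem.) -/
def IsStateOn (N : VonNeumannAlgebra H) (φ : B H →ₗ[ℂ] ℂ) : Prop :=
  φ 1 = 1 ∧ ∀ x : B H, x ∈ N → x.IsPositive → 0 ≤ φ x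

/-- A conditional expectation of `B(H)` onto a von Neumann subalgebra `N`:
a unital positive projection `E : B(H) → B(H)` with range `N`. -/
structure IsConditionalExpectation (N : VonNeumannAlgebra H) (E : B H →ₗ[ℂ] B H) : Prop where
  unital : E 1 = 1
  positive : ∀ x : B H, x.IsPositive → (E x).IsPositive
  mem_range : ∀ x : B H, E x ∈ N
  fixes : ∀ x ∈ N, E x = x

/-- The center of a von Neumann algebra `N`: elements of `N` commuting with all of `N`. -/
def center (N : VonNeumannAlgebra H) : Set (B H) := {z | z ∈ N ∧ ∀ y ∈ N, z * y = y * z}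

/-- A von Neumann algebra `N ⊆ B(H)` is injective if there is a conditional expectation
of `B(H)` onto `N`. -/
def IsInjectiveVNA (N : VonNeumannAlgebra H) : Prop :=
  ∃ E : B H →ₗ[ℂ] B H, IsConditionalExpectation H N E

/-- A locally compact quantum group `𝔾`, axiomatized over its Hilbert space `H = L²(𝔾)`
together with the tensor square `H2 = L²(𝔾) ⊗ L²(𝔾)`.  `M = L∞(𝔾)`, `Mhat = L∞(𝔾̂)`
(both acting canonically on `L²(𝔾)`). -/
structure LCQG where
  /-- `L∞(𝔾)` -/
  M : VonNeumannAlgebra H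
  /-- `L∞(𝔾̂)`, the dual von Neumann algebra, also acting on `L²(𝔾)` -/
  Mhat : VonNeumannAlgebra H
  /-- the tensor map `H × H → H2 = H ⊗ H` -/
  tmul : H →ₗ[ℂ] H →ₗ[ℂ] H2
  tmul_inner : ∀ a b c d : H, ⟪tmul a b, tmul c d⟫ = ⟪a, c⟫ * ⟪b, d⟫
  tmul_total : (Submodule.span ℂ {v : H2 | ∃ a b, v = tmul a b}).topologicalClosure = ⊤
  /-- the tensor product of operators: `tensorOp x y = x ⊗ y` on `H2` -/
  tensorOp : B H →ₗ[ℂ] B H →ₗ[ℂ] B H2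
  tensorOp_apply : ∀ (x y : B H) (a b : H), tensorOp x y (tmul a b) = tmul (x a) (y b)
  /-- the flip (tensor swap) unitary `Σ` on `H2` -/
  flipU : B H2
  flipU_apply : ∀ a b : H, flipU (tmul a b) = tmul b a
  /-- the tensor product `ω ⊗ ρ` of (normal) functionals -/
  funcTensor : (B H →ₗ[ℂ] ℂ) → (B H →ₗ[ℂ] ℂ) → (B H2 →ₗ[ℂ] ℂ)
  funcTensor_elem : ∀ ω ρ (x y : B H), funcTensor ω ρ (tensorOp x y) = ω x * ρ y
  funcTensor_normal : ∀ ω ρ, IsNormalFunctional H ω → IsNormalFunctional H ρ →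
    IsNormalFunctional H2 (funcTensor ω ρ)
  /-- the left slice map `sliceL ω = ω ⊗ id : B(H2) → B(H)` -/
  sliceL : (B H →ₗ[ℂ] ℂ) → B H2 →ₗ[ℂ] B H
  /-- the right slice map `sliceR ω = id ⊗ ω : B(H2) → B(H)` -/
  sliceR : (B H →ₗ[ℂ] ℂ) → B H2 →ₗ[ℂ] B H
  sliceL_char : ∀ ω X (ξ η : H),
    vecFunctional H ξ η (sliceL ω X) = funcTensor ω (vecFunctional H ξ η) X
  sliceR_char : ∀ ω X (ξ η : H),
    vecFunctional H ξ η (sliceR ω X) = funcTensor (vecFunctional H ξ η) ω X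
  /-- the left regular co-representation `W` -/
  W : B H2
  W_unitary_l : star W * W = 1
  W_unitary_r : W * star W = 1
  /-- `W ∈ L∞(𝔾) ⊗̄ L∞(𝔾̂)` (via the commutation theorem for tensor products) -/
  W_mem : ∀ a' ∈ M.commutant, ∀ b' ∈ Mhat.commutant, Commute W (tensorOp a' b')
  /-- the right regular co-representation `V` -/
  V : B H2
  V_unitary_l : star V * V = 1
  V_unitary_r : V * star V = 1
  /-- `V ∈ L∞(𝔾̂)' ⊗̄ L∞(𝔾)` (via the commutation theorem for tensor products) -/
  V_mem : ∀ a ∈ Mhat, ∀ b' ∈ M.commutant, Commute V (tensorOp a b')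
  /-- `Δ` maps `L∞(𝔾)` into `L∞(𝔾) ⊗̄ L∞(𝔾)` -/
  Delta_mem : ∀ x ∈ M, ∀ a' ∈ M.commutant, ∀ b' ∈ M.commutant,
    Commute (star W * tensorOp 1 x * W) (tensorOp a' b')
  /-- `V` also implements the co-multiplication: `Δ(x) = V(x ⊗ 1)V*` on `L∞(𝔾)` -/
  Delta_V : ∀ x ∈ M, star W * tensorOp 1 x * W = V * tensorOp x 1 * star V
  /-- slices of `Δ(x)`, `x ∈ L∞(𝔾)`, lie in `L∞(𝔾)` -/
  slice_Delta_mem : ∀ ω, ∀ x ∈ M, sliceL ω (star W * tensorOp 1 x * W) ∈ M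
  /-- slices `(ω ⊗ id)(V (x ⊗ 1) V*)` lie in `L∞(𝔾)`, since `V ∈ L∞(𝔾̂)' ⊗̄ L∞(𝔾)` -/
  sliceL_rConj_mem : ∀ ω (x : B H), sliceL ω (V * tensorOp x 1 * star V) ∈ M
  /-- the fixed-point characterization `L∞(𝔾̂) = {y : V(y ⊗ 1)V* = y ⊗ 1}`
  (cf. Kustermans–Vaes, proof of Proposition 4.2) -/
  fixedPoint_mem : ∀ y : B H, V * tensorOp y 1 * star V = tensorOp y 1 → y ∈ Mhat

namespace LCQG

variable {H H2} (Q : LCQG H H2)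

/-- The (extended) co-multiplication `Δ̄ : B(L²(𝔾)) → L∞(𝔾) ⊗̄ B(L²(𝔾))`,
`Δ̄(x) = W*(1 ⊗ x)W`; its restriction to `L∞(𝔾)` is the co-multiplication `Δ`. -/
def Delta (x : B H) : B H2 := star Q.W * Q.tensorOp 1 x * Q.W

/-- The map `x ↦ V (x ⊗ 1) V*` on `B(L²(𝔾))`. -/
def rConj : B H →ₗ[ℂ] B H2 where
  toFun x := Q.V * Q.tensorOp x 1 * star Q.V
  map_add' x y := by simp [mul_add, add_mul]
  map_smul' c x := by simp [mul_smul_comm, smul_mul_assoc]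

/-- The left regular co-representation of the dual: `Ŵ = Σ W* Σ` (i.e. `σ(W)*`). -/
def What : B H2 := Q.flipU * star Q.W * Q.flipU

/-- The (extended) co-multiplication of the dual quantum group, `Δ̂(y) = Ŵ*(1 ⊗ y)Ŵ`. -/
def Deltahat (y : B H) : B H2 := star Q.What * Q.tensorOp 1 y * Q.What

/-- `m` is a left-invariant mean on `L∞(𝔾)`: a state with
`m((ω ⊗ id)Δ(x)) = ω(1) m(x)` for all `x ∈ L∞(𝔾)` and normal `ω ∈ L¹(𝔾)`. -/
def IsLeftInvariantMean (m : B H →ₗ[ℂ] ℂ) : Prop :=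
  IsStateOn H Q.M m ∧
    ∀ x ∈ Q.M, ∀ ω : B H →ₗ[ℂ] ℂ, IsNormalFunctional H ω →
      m (Q.sliceL ω (Q.Delta x)) = ω 1 * m x

/-- `𝔾` is amenable if it admits a left-invariant mean. -/
def Amenable : Prop := ∃ m : B H →ₗ[ℂ] ℂ, Q.IsLeftInvariantMean m

/-- `𝔾` is quantum injective if there is a conditional expectation of `B(L²(𝔾))` onto
`L∞(𝔾)` mapping `L∞(𝔾̂)` into the center of `L∞(𝔾)`. -/
def QuantumInjective : Prop :=
  ∃ E : B H →ₗ[ℂ] B H, IsConditionalExpectation H Q.M E ∧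
    ∀ x ∈ Q.Mhat, E x ∈ center H Q.M

end LCQG

/-- A discrete quantum group `𝔾` of Kac type: a locally compact quantum group whose dual
`𝔾̂` is compact — i.e. it possesses a (bi-invariant, normal) Haar state `φ̂` on
`L∞(𝔾̂)` — such that `φ̂` is moreover a trace (Kac type).  The GNS construction of
`(L∞(𝔾̂), φ̂)` is canonically realized on `L²(𝔾)`, with GNS map `Λ = Λ_{φ̂}`. -/
structure DiscreteKacQG extends LCQG H H2 where
  /-- the Haar state `φ̂` of the compact dual `𝔾̂` -/
  phihat : B H →ₗ[ℂ] ℂ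
  phihat_state : IsStateOn H toLCQG.Mhat phihat
  phihat_normal : IsNormalFunctional H phihat
  /-- Kac type: the dual Haar state is a trace -/
  phihat_tracial : ∀ a ∈ toLCQG.Mhat, ∀ b ∈ toLCQG.Mhat, phihat (a * b) = phihat (b * a)
  /-- slices of `Δ̂(y)`, `y ∈ L∞(𝔾̂)`, lie in `L∞(𝔾̂)` -/
  slice_Deltahat_memL : ∀ ω, ∀ y ∈ toLCQG.Mhat, toLCQG.sliceL ω (toLCQG.Deltahat y) ∈ toLCQG.Mhat
  slice_Deltahat_memR : ∀ ω, ∀ y ∈ toLCQG.Mhat, toLCQG.sliceR ω (toLCQG.Deltahat y) ∈ toLCQG.Mhat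
  /-- left invariance of `φ̂`: `φ̂((ω ⊗ id)Δ̂(y)) = ω(1) φ̂(y)` -/
  phihat_left_inv : ∀ y ∈ toLCQG.Mhat, ∀ ω : B H →ₗ[ℂ] ℂ, IsNormalFunctional H ω →
    phihat (toLCQG.sliceL ω (toLCQG.Deltahat y)) = ω 1 * phihat y
  /-- right invariance of `φ̂`: `φ̂((id ⊗ ω)Δ̂(y)) = ω(1) φ̂(y)` -/
  phihat_right_inv : ∀ y ∈ toLCQG.Mhat, ∀ ω : B H →ₗ[ℂ] ℂ, IsNormalFunctional H ω →
    phihat (toLCQG.sliceR ω (toLCQG.Deltahat y)) = ω 1 * phihat y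
  /-- the GNS map `Λ_{φ̂} : L∞(𝔾̂) → L²(𝔾)` -/
  Lam : B H → H
  Lam_inner : ∀ a ∈ toLCQG.Mhat, ∀ b ∈ toLCQG.Mhat, ⟪Lam a, Lam b⟫ = phihat (star a * b)
  Lam_act : ∀ a ∈ toLCQG.Mhat, ∀ b ∈ toLCQG.Mhat, a (Lam b) = Lam (a * b)


section CentralState
variable {K : Type*} [NormedAddCommGroup K] [InnerProductSpace ℂ K] [CompleteSpace K]

theorem mapp (S T : K →L[ℂ] K) (ζ : K) : (S * T) ζ = S (T ζ) := rfl

theorem isPos_of (T : K →L[ℂ] K) (hs : star T = T) (h : ∀ ζ, 0 ≤ (⟪ζ, T ζ⟫).re) :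
    T.IsPositive := by
  rw [ContinuousLinearMap.isPositive_def']
  refine ⟨hs, fun x => ?_⟩
  rw [ContinuousLinearMap.reApplyInnerSelf_apply, ← inner_conj_symm, RCLike.re_to_complex,
    Complex.conj_re]
  exact h x

theorem inner_star_left (T : K →L[ℂ] K) (a b : K) : ⟪(star T) a, b⟫ = ⟪a, T b⟫ := by
  rw [ContinuousLinearMap.star_eq_adjoint, ContinuousLinearMap.adjoint_inner_left]

theorem inner_star_right (T : K →L[ℂ] K) (a b : K) : ⟪a, (star T) b⟫ = ⟪T a, b⟫ := by
  rw [ContinuousLinearMap.star_eq_adjoint, ContinuousLinearMap.adjoint_inner_right]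

theorem offdiag_bound (e x : K →L[ℂ] K) (he : star e = e) (hee : e * e = e) (s : ℝ) (hs : 0 < s) :
    ((((‖x‖ * s : ℝ) : ℂ) • e + ((‖x‖ * s⁻¹ : ℝ) : ℂ) • (1 - e)) -
      (e * x * (1 - e) + star (e * x * (1 - e)))).IsPositive := by
  have hf : star (1 - e) = 1 - e := by simp [he]
  have hff : (1 - e) * (1 - e) = 1 - e := by simp [mul_sub, sub_mul, hee]
  apply isPos_of
  · simp [he, Complex.conj_ofReal]
    abel
  · intro ζ
    have h1 : ⟪ζ, e ζ⟫ = ⟪e ζ, e ζ⟫ := by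
      conv_lhs => rw [← hee]
      rw [mapp, ← inner_star_left, he]
    have h2 : ⟪ζ, (1 - e) ζ⟫ = ⟪(1 - e) ζ, (1 - e) ζ⟫ := by
      conv_lhs => rw [← hff]
      rw [mapp, ← inner_star_left, hf]
    have h3 : ⟪ζ, (e * x * (1 - e)) ζ⟫ = ⟪e ζ, x ((1 - e) ζ)⟫ := by
      rw [mapp, mapp, ← inner_star_left, he]
    have h4 : (⟪ζ, (star (e * x * (1 - e))) ζ⟫).re = (⟪e ζ, x ((1 - e) ζ)⟫).re := by
      rw [inner_star_right, ← inner_conj_symm, Complex.conj_re, h3]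
    rw [_root_.sub_apply, _root_.add_apply, _root_.add_apply,
      inner_sub_right, inner_add_right, inner_add_right, Complex.sub_re, Complex.add_re,
      Complex.add_re, h3, h4, _root_.smul_apply, _root_.smul_apply,
      inner_smul_right, inner_smul_right, h1, h2, Complex.re_ofReal_mul, Complex.re_ofReal_mul]
    have h5 : (⟪e ζ, x ((1 - e) ζ)⟫).re ≤ ‖e ζ‖ * (‖x‖ * ‖(1 - e) ζ‖) := by
      refine (Complex.re_le_norm _).trans ((norm_inner_le_norm _ _).trans ?_)
      gcongr
      exact x.le_opNorm _
    have h6 : (⟪e ζ, e ζ⟫).re = ‖e ζ‖ ^ 2 := by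
      simpa using inner_self_eq_norm_sq (𝕜 := ℂ) (e ζ)
    have h7 : (⟪(1 - e) ζ, (1 - e) ζ⟫).re = ‖(1 - e) ζ‖ ^ 2 := by
      simpa using inner_self_eq_norm_sq (𝕜 := ℂ) ((1 - e) ζ)
    rw [h6, h7]
    set a := ‖e ζ‖
    set b := ‖(1 - e) ζ‖
    have h8 : 2 * (a * b) ≤ s * a ^ 2 + s⁻¹ * b ^ 2 := by
      have : 0 ≤ s⁻¹ * (s * a - b) ^ 2 := by positivity
      have h9 : s⁻¹ * (s * a - b) ^ 2 = s * a ^ 2 + s⁻¹ * b ^ 2 - 2 * (a * b) := by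
        field_simp
        ring
      linarith
    have := mul_le_mul_of_nonneg_left h8 (norm_nonneg x)
    nlinarith

theorem compress_zero (e T : K →L[ℂ] K) (he : star e = e) (hT : star T = T)
    (h : ∀ ζ, (⟪e ζ, T (e ζ)⟫).re = 0) : e * T * e = 0 := by
  have hs : IsSelfAdjoint (e * T * e) := by
    simp [IsSelfAdjoint, he, hT, mul_assoc]
  have key : ∀ ζ, ⟪(e * T * e) ζ, ζ⟫ = 0 := by
    intro ζ
    have h1 : ⟪ζ, (e * T * e) ζ⟫ = ⟪e ζ, T (e ζ)⟫ := by
      rw [mapp, mapp, ← inner_star_left, he]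
    have h2 : ⟪(e * T * e) ζ, ζ⟫ = ⟪ζ, (e * T * e) ζ⟫ := by
      rw [← inner_star_left, hs.star_eq]
    apply Complex.ext
    · rw [h2, h1, h]; rfl
    · have : (starRingEnd ℂ) ⟪(e * T * e) ζ, ζ⟫ = ⟪(e * T * e) ζ, ζ⟫ := by
        rw [inner_conj_symm, h2]
      simpa using (Complex.conj_eq_iff_im.mp this)
  have := (inner_map_self_eq_zero ((e * T * e : K →L[ℂ] K) : K →ₗ[ℂ] K)).mp key
  ext ζ
  exact congrArg (fun g : K →ₗ[ℂ] K => g ζ) this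

/-- abstract data: conditional expectation and a trace -/
structure CE (N : VonNeumannAlgebra K) (E : (K →L[ℂ] K) →ₗ[ℂ] (K →L[ℂ] K))
    (φ : (K →L[ℂ] K) →ₗ[ℂ] ℂ) : Prop where
  ce : IsConditionalExpectation K N E
  st : IsStateOn K N φ
  tr : ∀ a ∈ N, ∀ b ∈ N, φ (a * b) = φ (b * a)

theorem pos_star_map (E : (K →L[ℂ] K) →ₗ[ℂ] (K →L[ℂ] K))
    (hE : ∀ x : K →L[ℂ] K, x.IsPositive → (E x).IsPositive) (x : K →L[ℂ] K) (hx : star x = x) :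
    star (E x) = E x := by
  have h : x = x⁺ - x⁻ := (CFC.posPart_sub_negPart x hx).symm
  have h1 : (x⁺).IsPositive := (ContinuousLinearMap.nonneg_iff_isPositive _).mp (CFC.posPart_nonneg x)
  have h2 : (x⁻).IsPositive := (ContinuousLinearMap.nonneg_iff_isPositive _).mp (CFC.negPart_nonneg x)
  rw [h, map_sub, star_sub, (hE _ h1).isSelfAdjoint.star_eq, (hE _ h2).isSelfAdjoint.star_eq]

variable {N : VonNeumannAlgebra K} {E : (K →L[ℂ] K) →ₗ[ℂ] (K →L[ℂ] K)}
    {φ : (K →L[ℂ] K) →ₗ[ℂ] ℂ}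

theorem CE.bd (h : CE N E φ) (e x : K →L[ℂ] K) (heN : e ∈ N) (he : star e = e) (hee : e * e = e)
    (s : ℝ) (hs : 0 < s) (ζ : K) :
    (⟪ζ, E (e * x * (1 - e) + star (e * x * (1 - e))) ζ⟫).re ≤
      ‖x‖ * s * (⟪ζ, e ζ⟫).re + ‖x‖ * s⁻¹ * (⟪ζ, (1 - e) ζ⟫).re := by
  have h1 := h.ce.positive _ (offdiag_bound e x he hee s hs)
  have h2 := h1.re_inner_nonneg_right ζ
  rw [map_sub, map_add, map_smul, map_smul, h.ce.fixes e heN,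
    h.ce.fixes (1 - e) (sub_mem (one_mem _) heN)] at h2
  rw [_root_.sub_apply, _root_.add_apply,
      inner_sub_right, inner_add_right, _root_.smul_apply,
      _root_.smul_apply, inner_smul_right, inner_smul_right] at h2
  simp only [RCLike.re_to_complex, Complex.sub_re, Complex.add_re, Complex.re_ofReal_mul] at h2
  linarith

theorem small_of (a c : ℝ) (h : ∀ s : ℝ, 0 < s → a ≤ c * s) : a ≤ 0 := by
  by_contra hh
  push Not at hh
  have hc : 0 < c := by
    have := h 1 one_pos
    linarith
  have := h (a / (2 * c)) (by positivity)
  have h2 : c * (a / (2 * c)) = a / 2 := by field_simp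
  linarith

theorem CE.half (h : CE N E φ) (e x : K →L[ℂ] K) (heN : e ∈ N) (he : star e = e)
    (hee : e * e = e) : φ (E (e * x * (1 - e) + star (e * x * (1 - e)))) = 0 := by
  have hf : star (1 - e) = 1 - e := by simp [he]
  have hff : (1 - e) * (1 - e) = 1 - e := by simp [mul_sub, sub_mul, hee]
  have hfe : (1 - e) * e = 0 := by simp [sub_mul, hee]
  have hef : e * (1 - e) = 0 := by simp [mul_sub, hee]
  set z : K →L[ℂ] K := e * x * (1 - e) + star (e * x * (1 - e)) with hz
  have hneg : e * (-x) * (1 - e) + star (e * (-x) * (1 - e)) = -z := by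
    rw [hz]; simp; abel
  have hzs : star z = z := by rw [hz]; simp [add_comm]
  have hEs := pos_star_map E h.ce.positive z hzs
  have b1 := h.bd e x heN he hee
  have b2 := h.bd e (-x) heN he hee
  rw [hneg] at b2
  have e1 : ∀ ζ, e (e ζ) = e ζ := fun ζ => by rw [← mapp, hee]
  have e2 : ∀ ζ, (1 - e) (e ζ) = 0 := fun ζ => by rw [← mapp, hfe]; rfl
  have e3 : ∀ ζ, e ((1 - e) ζ) = 0 := fun ζ => by rw [← mapp, hef]; rfl
  have e4 : ∀ ζ, (1 - e) ((1 - e) ζ) = (1 - e) ζ := fun ζ => by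
    rw [← mapp, hff]
  have c1 : e * E z * e = 0 := by
    apply compress_zero e _ he hEs
    intro ζ
    apply le_antisymm
    · apply small_of _ (‖x‖ * (⟪e ζ, e ζ⟫).re)
      intro s hs
      have := b1 s hs (e ζ)
      rw [e1, e2, inner_zero_right] at this
      simp only [Complex.zero_re] at this
      linarith
    · apply neg_nonpos.mp
      apply small_of _ (‖x‖ * (⟪e ζ, e ζ⟫).re)
      intro s hs
      have := b2 s hs (e ζ)
      rw [e1, e2, inner_zero_right, map_neg] at this
      simp only [Complex.zero_re, _root_.neg_apply, inner_neg_right, Complex.neg_re,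
        norm_neg] at this
      linarith
  have c2 : (1 - e) * E z * (1 - e) = 0 := by
    apply compress_zero (1 - e) _ hf hEs
    intro ζ
    apply le_antisymm
    · apply small_of _ (‖x‖ * (⟪(1 - e) ζ, (1 - e) ζ⟫).re)
      intro s hs
      have := b1 s⁻¹ (inv_pos.mpr hs) ((1 - e) ζ)
      rw [e3, e4, inner_zero_right, inv_inv] at this
      simp only [Complex.zero_re] at this
      linarith
    · apply neg_nonpos.mp
      apply small_of _ (‖x‖ * (⟪(1 - e) ζ, (1 - e) ζ⟫).re)
      intro s hs
      have := b2 s⁻¹ (inv_pos.mpr hs) ((1 - e) ζ)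
      rw [e3, e4, inner_zero_right, inv_inv, map_neg] at this
      simp only [Complex.zero_re, _root_.neg_apply, inner_neg_right, Complex.neg_re,
        norm_neg] at this
      linarith
  have hEN := h.ce.mem_range z
  have hfN : (1 - e) ∈ N := sub_mem (one_mem _) heN
  have d1 : φ (e * E z) = 0 := by
    have : e * E z = e * (e * E z) := by rw [← mul_assoc, hee]
    rw [this, h.tr e heN _ (mul_mem heN hEN), c1, map_zero]
  have d2 : φ ((1 - e) * E z) = 0 := by
    have : (1 - e) * E z = (1 - e) * ((1 - e) * E z) := by rw [← mul_assoc, hff]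
    rw [this, h.tr _ hfN _ (mul_mem hfN hEN), c2, map_zero]
  have : E z = e * E z + (1 - e) * E z := by rw [← add_mul]; simp
  rw [this, map_add, d1, d2, add_zero]

theorem CE.offd (h : CE N E φ) (e x : K →L[ℂ] K) (heN : e ∈ N) (he : star e = e)
    (hee : e * e = e) : φ (E (e * x * (1 - e))) = 0 := by
  have h1 := h.half e x heN he hee
  have h2 := h.half e (Complex.I • x) heN he hee
  have h3 : e * (Complex.I • x) * (1 - e) + star (e * (Complex.I • x) * (1 - e)) =
      Complex.I • (e * x * (1 - e) - star (e * x * (1 - e))) := by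
    rw [mul_smul_comm, smul_mul_assoc, star_smul, smul_sub]
    simp [sub_eq_add_neg]
  rw [h3, map_smul, map_smul, smul_eq_mul] at h2
  have h4 := (mul_eq_zero.mp h2).resolve_left Complex.I_ne_zero
  rw [map_add, map_add] at h1
  rw [map_sub, map_sub] at h4
  linear_combination (1/2 : ℂ) * h1 + (1/2 : ℂ) * h4

theorem CE.proj (h : CE N E φ) (e x : K →L[ℂ] K) (heN : e ∈ N) (he : star e = e)
    (hee : e * e = e) : φ (E (e * x)) = φ (E (x * e)) := by
  have hf : star (1 - e) = 1 - e := by simp [he]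
  have hff : (1 - e) * (1 - e) = 1 - e := by simp [mul_sub, sub_mul, hee]
  have h1 := h.offd e x heN he hee
  have h2 := h.offd (1 - e) x (sub_mem (one_mem _) heN) hf hff
  have h3 : e * x - x * e = e * x * (1 - e) - (1 - e) * x * (1 - (1 - e)) := by
    simp only [mul_sub, sub_mul, mul_one, one_mul]; abel
  have h4 : φ (E (e * x - x * e)) = 0 := by rw [h3, map_sub, map_sub, h1, h2, sub_zero]
  rw [map_sub, map_sub] at h4
  exact sub_eq_zero.mp h4

end CentralState


section CentralState2
variable {K : Type*} [NormedAddCommGroup K] [InnerProductSpace ℂ K] [CompleteSpace K]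
variable {N : VonNeumannAlgebra K} {E : (K →L[ℂ] K) →ₗ[ℂ] (K →L[ℂ] K)}
    {φ : (K →L[ℂ] K) →ₗ[ℂ] ℂ}

theorem vn_smul_mem (c : ℂ) {x : K →L[ℂ] K} (hx : x ∈ N) : c • x ∈ N := by
  have h : c • x ∈ N.toStarSubalgebra := N.toStarSubalgebra.smul_mem hx c
  exact h

theorem mem_of_comm {x : K →L[ℂ] K} (h : ∀ y ∈ N.commutant, Commute x y) : x ∈ N := by
  rw [← VonNeumannAlgebra.commutant_commutant N, VonNeumannAlgebra.mem_commutant_iff]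
  intro g hg
  exact (h g hg).symm.eq

theorem comm_of_mem {x y : K →L[ℂ] K} (hx : x ∈ N) (hy : y ∈ N.commutant) : Commute x y :=
  VonNeumannAlgebra.mem_commutant_iff.mp hy x hx

theorem posPart_mem {x : K →L[ℂ] K} (hx : x ∈ N) : x⁺ ∈ N := by
  apply mem_of_comm
  intro y hy
  rw [CFC.posPart_def]
  exact Commute.cfcₙ_real (comm_of_mem hx hy) _

theorem sqrt_mem {x : K →L[ℂ] K} (hx : x ∈ N) : CFC.sqrt x ∈ N := by
  apply mem_of_comm
  intro y hy
  rw [CFC.sqrt]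
  exact Commute.cfcₙ_nnreal (comm_of_mem hx hy) _

theorem norm_sub_pos (x : K →L[ℂ] K) (hx : star x = x) :
    (((‖x‖ : ℝ) : ℂ) • (1 : K →L[ℂ] K) - x).IsPositive := by
  apply isPos_of
  · simp [hx]
  · intro ζ
    rw [_root_.sub_apply, inner_sub_right, _root_.smul_apply, inner_smul_right, Complex.sub_re,
      Complex.re_ofReal_mul]
    have h1 : (⟪ζ, x ζ⟫).re ≤ ‖ζ‖ * (‖x‖ * ‖ζ‖) := by
      refine (Complex.re_le_norm _).trans ((norm_inner_le_norm _ _).trans ?_)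
      gcongr
      exact x.le_opNorm _
    have h6 : (⟪ζ, ζ⟫).re = ‖ζ‖ ^ 2 := by
      simpa using inner_self_eq_norm_sq (𝕜 := ℂ) ζ
    have h7 : (1 : K →L[ℂ] K) ζ = ζ := rfl
    rw [h7, h6]
    nlinarith

theorem CE.m_pos (h : CE N E φ) (x : K →L[ℂ] K) (hx : x.IsPositive) : 0 ≤ φ (E x) :=
  h.st.2 _ (h.ce.mem_range x) (h.ce.positive x hx)

theorem CE.m_one (h : CE N E φ) : φ (E 1) = 1 := by rw [h.ce.unital, h.st.1]

theorem CE.m_sa (h : CE N E φ) (x : K →L[ℂ] K) (hx : star x = x) :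
    ‖φ (E x)‖ ≤ ‖x‖ := by
  have h1 := h.m_pos _ (norm_sub_pos x hx)
  have h2 := h.m_pos _ (norm_sub_pos (-x) (by simp [hx]))
  rw [map_sub, map_sub, map_smul, map_smul, h.m_one, smul_eq_mul, mul_one] at h1
  rw [map_sub, map_sub, map_smul, map_smul, h.m_one, smul_eq_mul, mul_one, norm_neg, map_neg,
    map_neg, sub_neg_eq_add] at h2
  rw [Complex.le_def] at h1 h2
  simp at h1 h2
  have h3 : (φ (E x)).im = 0 := h1.2
  have h4 : φ (E x) = ((φ (E x)).re : ℂ) := by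
    apply Complex.ext <;> simp [h3]
  rw [h4, Complex.norm_real, Real.norm_eq_abs, abs_le]
  constructor <;> linarith

theorem CE.m_bd (h : CE N E φ) (x : K →L[ℂ] K) : ‖φ (E x)‖ ≤ 2 * ‖x‖ := by
  have h1 := h.m_sa (realPart x : K →L[ℂ] K) (realPart x).2
  have h2 := h.m_sa (imaginaryPart x : K →L[ℂ] K) (imaginaryPart x).2
  have h3 : ‖(realPart x : K →L[ℂ] K)‖ ≤ ‖x‖ := realPart.norm_le x
  have h4 : ‖(imaginaryPart x : K →L[ℂ] K)‖ ≤ ‖x‖ := imaginaryPart.norm_le x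
  rw [← realPart_add_I_smul_imaginaryPart x]
  rw [map_add, map_add, map_smul, map_smul, realPart_add_I_smul_imaginaryPart x]
  refine (norm_add_le _ _).trans ?_
  rw [norm_smul, Complex.norm_I, one_mul]
  linarith

theorem dyadic (a : K →L[ℂ] K) (haN : a ∈ N) (ha0 : 0 ≤ a) (ha1 : a ≤ 1) :
    ∃ p a' : K →L[ℂ] K, p ∈ N ∧ star p = p ∧ p * p = p ∧ a' ∈ N ∧ 0 ≤ a' ∧ a' ≤ 1 ∧
      a = (1/2 : ℂ) • p + (1/2 : ℂ) • a' := by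
  have hsa : star a = a := (IsSelfAdjoint.of_nonneg ha0).star_eq
  set d : K →L[ℂ] K := a - (1/2 : ℂ) • 1 with hd
  have hds : IsSelfAdjoint d := by
    rw [IsSelfAdjoint, hd]; simp [hsa]
  have hdN : d ∈ N := sub_mem haN (vn_smul_mem _ (one_mem _))
  set b := d⁺ with hb
  set c := d⁻ with hc
  have hbc : b - c = d := CFC.posPart_sub_negPart d hds
  have hbN : b ∈ N := posPart_mem hdN
  have hcN : c ∈ N := by
    have : c = b - d := by rw [← hbc]; abel
    rw [this]; exact sub_mem hbN hdN
  have hb0 : 0 ≤ b := CFC.posPart_nonneg d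
  have hc0 : 0 ≤ c := CFC.negPart_nonneg d
  have hbs : star b = b := (IsSelfAdjoint.of_nonneg hb0).star_eq
  have hcs : star c = c := (IsSelfAdjoint.of_nonneg hc0).star_eq
  have hbcz : b * c = 0 := CFC.posPart_mul_negPart d
  let U : Submodule ℂ K := LinearMap.ker (b : K →ₗ[ℂ] K)
  have hUc : IsClosed (U : Set K) := b.isClosed_ker
  haveI : CompleteSpace U := hUc.completeSpace_coe
  set q : K →L[ℂ] K := U.starProjection with hq
  have hqp : IsStarProjection q := isStarProjection_starProjection
  have hqN : q ∈ N := by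
    rw [VonNeumannAlgebra.IsStarProjection.mem_iff hqp]
    intro y hy
    rw [hq, Submodule.range_starProjection, Module.End.mem_invtSubmodule]
    intro v hv
    have hv' : b v = 0 := hv
    change b (y v) = 0
    rw [← mapp, (comm_of_mem hbN hy).eq, mapp, hv', map_zero]
  have hqs : star q = q := hqp.isSelfAdjoint.star_eq
  have hqq : q * q = q := hqp.isIdempotentElem
  have hbq : b * q = 0 := by
    ext v
    exact (U.starProjection_apply_mem v : _)
  have hqb : q * b = 0 := by
    have := congrArg star hbq
    simpa [hqs, hbs] using this
  have hqc : q * c = c := by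
    ext v
    rw [mapp]
    apply Submodule.starProjection_eq_self_iff.mpr
    change b (c v) = 0
    rw [← mapp, hbcz]; rfl
  have hcq : c * q = c := by
    have := congrArg star hqc
    simpa [hqs, hcs] using this
  have hab : a = (1/2 : ℂ) • 1 + b - c := by
    rw [add_sub_assoc, hbc, hd]; abel
  have hpq : star (1 - q) = 1 - q := by simp [hqs]
  refine ⟨1 - q, q + (2 : ℂ) • b - (2 : ℂ) • c, sub_mem (one_mem _) hqN, hpq,
    by simp [mul_sub, sub_mul, hqq], sub_mem (add_mem hqN (vn_smul_mem _ hbN)) (vn_smul_mem _ hcN),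
    ?_, ?_, ?_⟩
  · have h1 : 0 ≤ star q * a * q := star_left_conjugate_nonneg ha0 q
    have h2 : q + (2 : ℂ) • b - (2 : ℂ) • c = star q * a * q + star q * a * q + b + b := by
      rw [hqs, hab]
      simp only [mul_sub, mul_add, sub_mul, add_mul, mul_smul_comm, smul_mul_assoc, mul_one, hqq,
        hqb, zero_mul, hqc, hcq]
      module
    rw [h2]
    exact add_nonneg (add_nonneg (add_nonneg h1 h1) hb0) hb0
  · have h1 : 0 ≤ star (1 - q) * (1 - a) * (1 - q) :=
      star_left_conjugate_nonneg (sub_nonneg.mpr ha1) (1 - q)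
    have h2 : 1 - (q + (2 : ℂ) • b - (2 : ℂ) • c) =
        star (1 - q) * (1 - a) * (1 - q) + star (1 - q) * (1 - a) * (1 - q) + c + c := by
      rw [hpq, hab]
      simp only [mul_sub, mul_add, sub_mul, add_mul, mul_smul_comm, smul_mul_assoc, mul_one, one_mul,
        hqq, hqb, hbq, zero_mul, mul_zero, hqc, hcq]
      module
    rw [← sub_nonneg, h2]
    exact add_nonneg (add_nonneg (add_nonneg h1 h1) hc0) hc0
  · rw [hab]; module

theorem CE.unit_int (h : CE N E φ) (x : K →L[ℂ] K) (n : ℕ) : ∀ a ∈ N, 0 ≤ a → a ≤ 1 →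
    ‖φ (E (a * x)) - φ (E (x * a))‖ ≤ (4 * ‖x‖) * (1/2 : ℝ) ^ n := by
  induction n with
  | zero =>
    intro a haN ha0 ha1
    have hn : ‖a‖ ≤ 1 := (CStarAlgebra.norm_le_one_iff_of_nonneg a ha0).mpr ha1
    have h1 := h.m_bd (a * x)
    have h2 := h.m_bd (x * a)
    have h3 : ‖a * x‖ ≤ ‖a‖ * ‖x‖ := norm_mul_le _ _
    have h4 : ‖x * a‖ ≤ ‖x‖ * ‖a‖ := norm_mul_le _ _
    refine (norm_sub_le _ _).trans ?_
    nlinarith [norm_nonneg x, norm_nonneg a]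
  | succ n ih =>
    intro a haN ha0 ha1
    obtain ⟨p, a', hpN, hps, hpp, ha'N, ha'0, ha'1, hab⟩ := dyadic a haN ha0 ha1
    have h1 := ih a' ha'N ha'0 ha'1
    have h2 := h.proj p x hpN hps hpp
    have h3 : φ (E (a * x)) - φ (E (x * a)) =
        (1/2 : ℂ) * (φ (E (a' * x)) - φ (E (x * a'))) := by
      rw [hab]
      simp only [add_mul, mul_add, smul_mul_assoc, mul_smul_comm, map_add, map_smul, smul_eq_mul, h2]
      ring
    rw [h3, norm_mul, pow_succ]
    have : ‖(1/2 : ℂ)‖ = 1/2 := by norm_num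
    rw [this]
    linarith

theorem CE.central01 (h : CE N E φ) (x a : K →L[ℂ] K) (ha : a ∈ N) (ha0 : 0 ≤ a) (ha1 : a ≤ 1) :
    φ (E (a * x)) = φ (E (x * a)) := by
  have h1 : ‖φ (E (a * x)) - φ (E (x * a))‖ ≤ 0 := by
    refine ge_of_tendsto' (x := Filter.atTop) ?_ (fun n => h.unit_int x n a ha ha0 ha1)
    have := (tendsto_pow_atTop_nhds_zero_of_lt_one (by norm_num : (0:ℝ) ≤ 1/2)
      (by norm_num : (1/2 : ℝ) < 1)).const_mul (4 * ‖x‖)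
    simpa using this
  exact sub_eq_zero.mp (norm_le_zero_iff.mp h1)

theorem CE.central_sa (h : CE N E φ) (x a : K →L[ℂ] K) (ha : a ∈ N) (has : star a = a) :
    φ (E (a * x)) = φ (E (x * a)) := by
  have h1 := norm_sub_pos a has
  have h2 := norm_sub_pos (-a) (by simp [has])
  rw [norm_neg, sub_neg_eq_add] at h2
  set R : ℝ := ‖a‖ + 1 with hR
  have hRp : 0 < R := by positivity
  have hRc : (R : ℂ) ≠ 0 := by exact_mod_cast hRp.ne'
  have hc : (0 : ℂ) ≤ ((1 / (2 * R) : ℝ) : ℂ) := by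
    exact_mod_cast (by positivity : (0:ℝ) ≤ 1 / (2 * R))
  have p1 : (1 : K →L[ℂ] K).IsPositive := ContinuousLinearMap.isPositive_one
  set g : K →L[ℂ] K := ((1 / (2 * R) : ℝ) : ℂ) • (((‖a‖ : ℝ) : ℂ) • 1 + a + 1) with hg
  have hg0 : 0 ≤ g := by
    rw [ContinuousLinearMap.nonneg_iff_isPositive]
    exact (h2.add p1).smul_of_nonneg hc
  have hg1 : g ≤ 1 := by
    rw [ContinuousLinearMap.le_def]
    have h3 : 1 - g = ((1 / (2 * R) : ℝ) : ℂ) • (((‖a‖ : ℝ) : ℂ) • (1 : K →L[ℂ] K) - a + 1) := by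
      have : (1 : K →L[ℂ] K) = ((1 / (2 * R) : ℝ) : ℂ) • ((2 * R : ℂ) • (1 : K →L[ℂ] K)) := by
        rw [smul_smul]
        have : ((1 / (2 * R) : ℝ) : ℂ) * (2 * R) = 1 := by push_cast; field_simp
        rw [this, one_smul]
      rw [hg]
      nth_rewrite 1 [this]
      rw [← smul_sub, hR]
      congr 1
      push_cast
      module
    rw [h3]
    exact (h1.add p1).smul_of_nonneg hc
  have hgN : g ∈ N := vn_smul_mem _ (add_mem (add_mem (vn_smul_mem _ (one_mem _)) ha) (one_mem _))
  have h5 := h.central01 x g hgN hg0 hg1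
  rw [hg] at h5
  simp only [add_mul, mul_add, smul_mul_assoc, mul_smul_comm, map_add, map_smul, smul_eq_mul,
    one_mul, mul_one] at h5
  have h6 : ((1 / (2 * R) : ℝ) : ℂ) ≠ 0 := by
    exact_mod_cast (by positivity : (1 / (2 * R)) ≠ 0)
  have h7 := mul_left_cancel₀ h6 (by linear_combination h5 :
    ((1 / (2 * R) : ℝ) : ℂ) * φ (E (a * x)) = ((1 / (2 * R) : ℝ) : ℂ) * φ (E (x * a)))
  exact h7

theorem CE.central (h : CE N E φ) (x a : K →L[ℂ] K) (ha : a ∈ N) :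
    φ (E (a * x)) = φ (E (x * a)) := by
  have hs : star a ∈ N := star_mem ha
  have h1 := h.central_sa x (a + star a) (add_mem ha hs) (by simp [add_comm])
  have h2 := h.central_sa x (Complex.I • (a - star a)) (vn_smul_mem _ (sub_mem ha hs))
    (by rw [star_smul]; simp [smul_sub]; abel)
  simp only [add_mul, mul_add, sub_mul, mul_sub, smul_mul_assoc, mul_smul_comm, map_add, map_sub,
    map_smul, smul_eq_mul] at h1 h2
  have h3 : (φ (E (a * x)) - φ (E (star a * x))) = (φ (E (x * a)) - φ (E (x * star a))) :=
    mul_left_cancel₀ Complex.I_ne_zero (by linear_combination h2)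
  linear_combination (1/2 : ℂ) * h1 + (1/2 : ℂ) * h3

/-- positivity of the central state on products -/
theorem CE.mul_pos (h : CE N E φ) (x q : K →L[ℂ] K) (hx : x.IsPositive) (hqN : q ∈ N)
    (hq : 0 ≤ q) : 0 ≤ φ (E (x * q)) := by
  set r := CFC.sqrt q with hr
  have hrN : r ∈ N := sqrt_mem hqN
  have hrr : r * r = q := CFC.sqrt_mul_sqrt_self q hq
  have hrs : star r = r := (IsSelfAdjoint.of_nonneg (CFC.sqrt_nonneg q)).star_eq
  rw [← hrr, ← mul_assoc, ← h.central (x * r) r hrN]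
  apply h.m_pos
  rw [← ContinuousLinearMap.nonneg_iff_isPositive] at hx ⊢
  have := star_left_conjugate_nonneg hx r
  rwa [hrs, mul_assoc] at this

end CentralState2


section NormalFun
variable {K : Type*} [NormedAddCommGroup K] [InnerProductSpace ℂ K] [CompleteSpace K]

theorem summable_norm_mul {ξ η : ℕ → K} (h1 : Summable (fun n => ‖ξ n‖ ^ 2))
    (h2 : Summable (fun n => ‖η n‖ ^ 2)) : Summable (fun n => ‖η n‖ * ‖ξ n‖) := by
  refine Summable.of_nonneg_of_le (fun n => by positivity) (fun n => ?_) (h1.add h2)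
  nlinarith [sq_nonneg (‖ξ n‖ - ‖η n‖), sq_nonneg (‖ξ n‖), sq_nonneg (‖η n‖)]

theorem norm_inner_op_le (X : K →L[ℂ] K) (a b : K) : ‖⟪a, X b⟫‖ ≤ ‖X‖ * (‖a‖ * ‖b‖) := by
  refine (norm_inner_le_norm _ _).trans ?_
  have := X.le_opNorm b
  nlinarith [norm_nonneg a, norm_nonneg b]

theorem seq_summable {ξ η : ℕ → K} (h1 : Summable (fun n => ‖ξ n‖ ^ 2))
    (h2 : Summable (fun n => ‖η n‖ ^ 2)) (X : K →L[ℂ] K) :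
    Summable (fun n => ⟪η n, X (ξ n)⟫) := by
  refine Summable.of_norm_bounded ((summable_norm_mul h1 h2).mul_left ‖X‖) (fun n => ?_)
  exact norm_inner_op_le X _ _

/-- normal functional attached to square summable sequences -/
def seqFun (ξ η : ℕ → K) (h1 : Summable (fun n => ‖ξ n‖ ^ 2))
    (h2 : Summable (fun n => ‖η n‖ ^ 2)) : (K →L[ℂ] K) →ₗ[ℂ] ℂ where
  toFun X := ∑' n, ⟪η n, X (ξ n)⟫
  map_add' X Y := by
    rw [← (seq_summable h1 h2 X).tsum_add (seq_summable h1 h2 Y)]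
    congr 1; ext n; rw [_root_.add_apply, inner_add_right]
  map_smul' c X := by
    rw [RingHom.id_apply, smul_eq_mul, ← tsum_mul_left]
    congr 1; ext n; rw [_root_.smul_apply, inner_smul_right]

theorem seqFun_normal (ξ η : ℕ → K) (h1 : Summable (fun n => ‖ξ n‖ ^ 2))
    (h2 : Summable (fun n => ‖η n‖ ^ 2)) : IsNormalFunctional K (seqFun ξ η h1 h2) :=
  ⟨ξ, η, h1, h2, fun X => (seq_summable h1 h2 X).hasSum⟩

theorem normal_bdd {f : (K →L[ℂ] K) →ₗ[ℂ] ℂ} (hf : IsNormalFunctional K f) :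
    ∃ C : ℝ, ∀ X, ‖f X‖ ≤ C * ‖X‖ := by
  obtain ⟨ξ, η, h1, h2, h⟩ := hf
  refine ⟨∑' n, ‖η n‖ * ‖ξ n‖, fun X => ?_⟩
  rw [← (h X).tsum_eq, mul_comm, ← tsum_mul_left]
  exact tsum_of_norm_bounded ((summable_norm_mul h1 h2).mul_left ‖X‖).hasSum
    (fun n => norm_inner_op_le X _ _)

/-- finite rank truncation -/
def trunc {ι : Type*} (e : HilbertBasis ι ℂ K) (X : K →L[ℂ] K) (F : Finset ι) : K →L[ℂ] K :=
  ∑ i ∈ F, InnerProductSpace.rankOne ℂ (X (e i)) (e i)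

theorem trunc_apply {ι : Type*} (e : HilbertBasis ι ℂ K) (X : K →L[ℂ] K) (F : Finset ι) (v : K) :
    trunc e X F v = X (∑ i ∈ F, ⟪e i, v⟫ • e i) := by
  rw [trunc, ContinuousLinearMap.sum_apply, map_sum]
  refine Finset.sum_congr rfl fun i _ => ?_
  rw [map_smul]; simp

theorem trunc_norm {ι : Type*} (e : HilbertBasis ι ℂ K) (X : K →L[ℂ] K) (F : Finset ι) (v : K) :
    ‖trunc e X F v‖ ≤ ‖X‖ * ‖v‖ := by
  rw [trunc_apply]
  refine (X.le_opNorm _).trans ?_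
  gcongr
  have h1 : ‖∑ i ∈ F, ⟪e i, v⟫ • e i‖ ^ 2 = ∑ i ∈ F, ‖⟪e i, v⟫‖ ^ 2 := by
    have h3 := e.orthonormal.inner_sum (fun i => ⟪e i, v⟫) (fun i => ⟪e i, v⟫) F
    rw [inner_self_eq_norm_sq_to_K] at h3
    have h4 : ∀ z : ℂ, (starRingEnd ℂ) z * z = ((‖z‖ ^ 2 : ℝ) : ℂ) := fun z => by
      rw [mul_comm, Complex.mul_conj']; push_cast; rfl
    simp only [h4] at h3
    exact Complex.ofReal_injective (by simpa using h3)
  have h2 : ∑ i ∈ F, ‖⟪e i, v⟫‖ ^ 2 ≤ ‖v‖ ^ 2 := e.orthonormal.sum_inner_products_le v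
  rw [← h1] at h2
  exact (sq_le_sq₀ (norm_nonneg _) (norm_nonneg _)).mp h2

theorem trunc_tendsto {ι : Type*} (e : HilbertBasis ι ℂ K) (X : K →L[ℂ] K) (v : K) :
    Filter.Tendsto (fun F => trunc e X F v) Filter.atTop (nhds (X v)) := by
  have h : HasSum (fun i => ⟪e i, v⟫ • e i) v := by
    have := e.hasSum_repr v
    simpa [HilbertBasis.repr_apply_apply] using this
  have h2 := (X.continuous.tendsto v).comp h
  refine h2.congr fun F => ?_
  rw [trunc_apply]; rfl

theorem normal_trunc {ι : Type*} (e : HilbertBasis ι ℂ K) {f : (K →L[ℂ] K) →ₗ[ℂ] ℂ}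
    (hf : IsNormalFunctional K f) (X : K →L[ℂ] K) :
    Filter.Tendsto (fun F => f (trunc e X F)) Filter.atTop (nhds (f X)) := by
  obtain ⟨ξ, η, h1, h2, h⟩ := hf
  have h3 : ∀ Y, f Y = ∑' n, ⟪η n, Y (ξ n)⟫ := fun Y => (h Y).tsum_eq.symm
  simp only [h3]
  refine tendsto_tsum_of_dominated_convergence ((summable_norm_mul h1 h2).mul_left ‖X‖) ?_ ?_
  · intro n
    exact Filter.Tendsto.inner tendsto_const_nhds (trunc_tendsto e X (ξ n))
  · refine Filter.Eventually.of_forall fun F n => ?_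
    refine (norm_inner_le_norm _ _).trans ?_
    have := trunc_norm e X F (ξ n)
    nlinarith [norm_nonneg (η n), norm_nonneg (ξ n)]

theorem normal_ext {f g : (K →L[ℂ] K) →ₗ[ℂ] ℂ} (hf : IsNormalFunctional K f)
    (hg : IsNormalFunctional K g) (S : Set K) (hS : (Submodule.span ℂ S).topologicalClosure = ⊤)
    (h : ∀ u ∈ S, ∀ v ∈ S, f (InnerProductSpace.rankOne ℂ u v) =
      g (InnerProductSpace.rankOne ℂ u v)) : f = g := by
  obtain ⟨Cf, hCf⟩ := normal_bdd hf
  obtain ⟨Cg, hCg⟩ := normal_bdd hg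
  let fc : (K →L[ℂ] K) →L[ℂ] ℂ := f.mkContinuous Cf hCf
  let gc : (K →L[ℂ] K) →L[ℂ] ℂ := g.mkContinuous Cg hCg
  have hfc : ∀ X, fc X = f X := fun X => rfl
  have hgc : ∀ X, gc X = g X := fun X => rfl
  have hd : Dense (Submodule.span ℂ S : Set K) := by
    rwa [Submodule.dense_iff_topologicalClosure_eq_top]
  have s1 : ∀ v ∈ S, ∀ u, f (InnerProductSpace.rankOne ℂ u v) =
      g (InnerProductSpace.rankOne ℂ u v) := by
    intro v hv u
    have : fc ∘L ((InnerProductSpace.rankOne ℂ).flip v) =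
      gc ∘L ((InnerProductSpace.rankOne ℂ).flip v) := by
      apply ContinuousLinearMap.ext_on hd
      intro u hu
      exact h u hu v hv
    exact congrArg (fun T : K →L[ℂ] ℂ => T u) this
  have s2 : ∀ v u, f (InnerProductSpace.rankOne ℂ u v) =
      g (InnerProductSpace.rankOne ℂ u v) := by
    intro v u
    have : fc.comp (InnerProductSpace.rankOne ℂ u) =
      gc.comp (InnerProductSpace.rankOne ℂ u) := by
      apply ContinuousLinearMap.ext_on hd
      intro v hv
      exact s1 v hv u
    exact congrArg (fun T : K →L⋆[ℂ] ℂ => T v) this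
  obtain ⟨w, e, -⟩ := exists_hilbertBasis ℂ K
  ext X
  refine tendsto_nhds_unique (normal_trunc e hf X) ?_
  refine (normal_trunc e hg X).congr fun F => ?_
  rw [trunc, map_sum, map_sum]
  exact Finset.sum_congr rfl fun i _ => (s2 _ _).symm

end NormalFun


section Tensor
variable {H H2 : Type*}
  [NormedAddCommGroup H] [InnerProductSpace ℂ H] [CompleteSpace H]
  [NormedAddCommGroup H2] [InnerProductSpace ℂ H2] [CompleteSpace H2] (Q : LCQG H H2)

namespace LCQG

theorem norm_tmul (a b : H) : ‖Q.tmul a b‖ = ‖a‖ * ‖b‖ := by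
  have h := Q.tmul_inner a b a b
  rw [inner_self_eq_norm_sq_to_K, inner_self_eq_norm_sq_to_K, inner_self_eq_norm_sq_to_K] at h
  have h2 : ‖Q.tmul a b‖ ^ 2 = (‖a‖ * ‖b‖) ^ 2 := by
    rw [mul_pow]
    exact Complex.ofReal_injective (by simpa using h)
  exact (sq_eq_sq₀ (norm_nonneg _) (by positivity)).mp h2

/-- creation operator on the left leg -/
def Rk (ξ : H) : H →L[ℂ] H2 :=
  (Q.tmul ξ).mkContinuous ‖ξ‖ (fun b => (Q.norm_tmul ξ b).le)

/-- creation operator on the right leg -/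
def Lk (a : H) : H →L[ℂ] H2 :=
  (Q.tmul.flip a).mkContinuous ‖a‖ (fun b => by
    rw [LinearMap.flip_apply, Q.norm_tmul, mul_comm])

@[simp] theorem Rk_apply (ξ b : H) : Q.Rk ξ b = Q.tmul ξ b := rfl
@[simp] theorem Lk_apply (a b : H) : Q.Lk a b = Q.tmul b a := rfl

/-- adjoint of the left creation operator -/
def Rd (ξ : H) : H2 →L[ℂ] H := ContinuousLinearMap.adjoint (Q.Rk ξ)
/-- adjoint of the right creation operator -/
def Ld (a : H) : H2 →L[ℂ] H := ContinuousLinearMap.adjoint (Q.Lk a)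

theorem inner_Rd (ξ μ : H) (u : H2) : ⟪μ, Q.Rd ξ u⟫ = ⟪Q.tmul ξ μ, u⟫ := by
  rw [Rd, ContinuousLinearMap.adjoint_inner_right, Rk_apply]

theorem inner_Ld (a μ : H) (u : H2) : ⟪μ, Q.Ld a u⟫ = ⟪Q.tmul μ a, u⟫ := by
  rw [Ld, ContinuousLinearMap.adjoint_inner_right, Lk_apply]

theorem Rd_inner (ξ μ : H) (u : H2) : ⟪Q.Rd ξ u, μ⟫ = ⟪u, Q.tmul ξ μ⟫ := by
  rw [Rd, ContinuousLinearMap.adjoint_inner_left, Rk_apply]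

theorem Ld_inner (a μ : H) (u : H2) : ⟪Q.Ld a u, μ⟫ = ⟪u, Q.tmul μ a⟫ := by
  rw [Ld, ContinuousLinearMap.adjoint_inner_left, Lk_apply]

theorem Rd_norm (η : H) (u : H2) : ‖Q.Rd η u‖ ≤ ‖η‖ * ‖u‖ := by
  have h1 : ‖Q.Rd η‖ ≤ ‖η‖ := by
    rw [Rd, LinearIsometryEquiv.norm_map]
    exact LinearMap.mkContinuous_norm_le _ (norm_nonneg _) _
  exact (Q.Rd η).le_of_opNorm_le h1 u

theorem Rd_tmul (ξ a b : H) : Q.Rd ξ (Q.tmul a b) = ⟪ξ, a⟫ • b := by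
  refine ext_inner_left ℂ fun μ => ?_
  rw [inner_Rd, Q.tmul_inner, inner_smul_right]

theorem Ld_tmul (ξ a b : H) : Q.Ld ξ (Q.tmul a b) = ⟪ξ, b⟫ • a := by
  refine ext_inner_left ℂ fun μ => ?_
  rw [inner_Ld, Q.tmul_inner, inner_smul_right, mul_comm]

theorem dense_tmul : Dense (Submodule.span ℂ {v : H2 | ∃ a b, v = Q.tmul a b} : Set H2) := by
  rw [Submodule.dense_iff_topologicalClosure_eq_top]
  exact Q.tmul_total

theorem ext_tmul {F : Type*} [NormedAddCommGroup F] [NormedSpace ℂ F] {S T : H2 →L[ℂ] F}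
    (h : ∀ a b, S (Q.tmul a b) = T (Q.tmul a b)) : S = T := by
  apply ContinuousLinearMap.ext_on Q.dense_tmul
  rintro _ ⟨a, b, rfl⟩
  exact h a b

theorem ext_vec {u v : H2} (h : ∀ a b, ⟪Q.tmul a b, u⟫ = ⟪Q.tmul a b, v⟫) : u = v := by
  have : innerSL ℂ u = innerSL ℂ v := by
    apply Q.ext_tmul
    intro a b
    simp only [innerSL_apply_apply]
    rw [← inner_conj_symm, h, inner_conj_symm]
  refine ext_inner_right ℂ fun w => ?_
  exact congrArg (fun T : H2 →L[ℂ] ℂ => T w) this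

theorem ext_op {S T : B H2} (h : ∀ a b c d, ⟪Q.tmul a b, S (Q.tmul c d)⟫ =
    ⟪Q.tmul a b, T (Q.tmul c d)⟫) : S = T :=
  Q.ext_tmul fun c d => Q.ext_vec fun a b => h a b c d

theorem tOp_mul (x y x' y' : B H) :
    Q.tensorOp x y * Q.tensorOp x' y' = Q.tensorOp (x * x') (y * y') := by
  apply Q.ext_tmul
  intro a b
  simp [Q.tensorOp_apply]

theorem tOp_one : Q.tensorOp 1 1 = 1 := by
  apply Q.ext_tmul
  intro a b
  simp [Q.tensorOp_apply]

theorem tOp_star (x y : B H) : star (Q.tensorOp x y) = Q.tensorOp (star x) (star y) := by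
  apply Q.ext_op
  intro a b c d
  rw [inner_star_right, Q.tensorOp_apply, Q.tensorOp_apply, Q.tmul_inner, Q.tmul_inner,
    inner_star_right, inner_star_right]

theorem flip_star : star Q.flipU = Q.flipU := by
  apply Q.ext_op
  intro a b c d
  rw [inner_star_right, Q.flipU_apply, Q.flipU_apply, Q.tmul_inner, Q.tmul_inner, mul_comm]

/-- slice of the left leg by a vector functional -/
def sl (ξ η : H) (X : B H2) : B H := Q.Rd η ∘L X ∘L Q.Rk ξ
/-- slice of the right leg by a vector functional -/
def sr (ξ η : H) (X : B H2) : B H := Q.Ld η ∘L X ∘L Q.Lk ξ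

theorem sl_apply (ξ η : H) (X : B H2) (ν : H) : Q.sl ξ η X ν = Q.Rd η (X (Q.tmul ξ ν)) := rfl
theorem sr_apply (ξ η : H) (X : B H2) (ν : H) : Q.sr ξ η X ν = Q.Ld η (X (Q.tmul ν ξ)) := rfl

theorem inner_sl (ξ η : H) (X : B H2) (μ ν : H) :
    ⟪μ, Q.sl ξ η X ν⟫ = ⟪Q.tmul η μ, X (Q.tmul ξ ν)⟫ := by
  rw [sl_apply, inner_Rd]

theorem inner_sr (ξ η : H) (X : B H2) (μ ν : H) :
    ⟪μ, Q.sr ξ η X ν⟫ = ⟪Q.tmul μ η, X (Q.tmul ν ξ)⟫ := by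
  rw [sr_apply, inner_Ld]

theorem rankOne_tmul (a b c d : H) : InnerProductSpace.rankOne ℂ (Q.tmul a b) (Q.tmul c d) =
    Q.tensorOp (InnerProductSpace.rankOne ℂ a c) (InnerProductSpace.rankOne ℂ b d) := by
  apply Q.ext_tmul
  intro x y
  rw [Q.tensorOp_apply]
  simp [Q.tmul_inner, smul_smul, mul_comm]

theorem funcTensor_unique (ω ρ : B H →ₗ[ℂ] ℂ) (hω : IsNormalFunctional H ω)
    (hρ : IsNormalFunctional H ρ) (g : B H2 →ₗ[ℂ] ℂ) (hg : IsNormalFunctional H2 g)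
    (h : ∀ x y, g (Q.tensorOp x y) = ω x * ρ y) : Q.funcTensor ω ρ = g := by
  apply normal_ext (Q.funcTensor_normal ω ρ hω hρ) hg _ Q.tmul_total
  rintro _ ⟨a, b, rfl⟩ _ ⟨c, d, rfl⟩
  rw [rankOne_tmul, Q.funcTensor_elem, h]

theorem single_summable (ξ : H) : Summable (fun n : ℕ => ‖(if n = 0 then ξ else 0 : H)‖ ^ 2) := by
  apply summable_of_ne_finset_zero (s := {0})
  intro n hn
  simp at hn
  simp [hn]

theorem vec_normal (ξ η : H) : IsNormalFunctional H (vecFunctional H ξ η) := by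
  refine ⟨fun n => if n = 0 then ξ else 0, fun n => if n = 0 then η else 0,
    single_summable ξ, single_summable η, fun x => ?_⟩
  have := hasSum_single (f := fun n : ℕ => ⟪(if n = 0 then η else 0 : H),
    x (if n = 0 then ξ else 0 : H)⟫) 0 (fun n hn => by simp [hn])
  simpa [vecFunctional] using this

theorem funcTensor_hasSum (ω : B H →ₗ[ℂ] ℂ) {ξ η : ℕ → H} (h1 : Summable (fun n => ‖ξ n‖ ^ 2))
    (h2 : Summable (fun n => ‖η n‖ ^ 2)) (h : ∀ x : B H, HasSum (fun n => ⟪η n, x (ξ n)⟫) (ω x))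
    (a b : H) (X : B H2) :
    HasSum (fun n => ⟪Q.tmul (η n) b, X (Q.tmul (ξ n) a)⟫)
      (Q.funcTensor ω (vecFunctional H a b) X) := by
  have k1 : Summable (fun n => ‖Q.tmul (ξ n) a‖ ^ 2) := by
    simp only [norm_tmul, mul_pow]; exact h1.mul_right _
  have k2 : Summable (fun n => ‖Q.tmul (η n) b‖ ^ 2) := by
    simp only [norm_tmul, mul_pow]; exact h2.mul_right _
  have := Q.funcTensor_unique ω (vecFunctional H a b) ⟨ξ, η, h1, h2, h⟩ (vec_normal a b)
    (seqFun _ _ k1 k2) (seqFun_normal _ _ k1 k2) (fun x y => by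
      change ∑' n, _ = _
      simp only [Q.tensorOp_apply, Q.tmul_inner]
      rw [tsum_mul_right, (h x).tsum_eq]
      rfl)
  rw [this]
  exact (seq_summable k1 k2 X).hasSum

theorem sliceL_vec (ξ η : H) (X : B H2) : Q.sliceL (vecFunctional H ξ η) X = Q.sl ξ η X := by
  ext ν
  refine ext_inner_left ℂ fun μ => ?_
  have h1 := Q.sliceL_char (vecFunctional H ξ η) X ν μ
  have h2 := Q.funcTensor_hasSum (vecFunctional H ξ η) (ξ := fun n => if n = 0 then ξ else 0)
    (η := fun n => if n = 0 then η else 0) (single_summable ξ) (single_summable η) (fun x => by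
      have := hasSum_single (f := fun n : ℕ => ⟪(if n = 0 then η else 0 : H),
        x (if n = 0 then ξ else 0 : H)⟫) 0 (fun n hn => by simp [hn])
      simpa [vecFunctional] using this) ν μ X
  have h3 := hasSum_single (f := fun n : ℕ => ⟪Q.tmul (if n = 0 then η else 0 : H) μ,
        X (Q.tmul (if n = 0 then ξ else 0 : H) ν)⟫) 0 (fun n hn => by simp [hn])
  have h4 := h2.unique h3
  rw [← h1] at h4
  rw [inner_sl]
  simpa [vecFunctional] using h4

/-- conjugation of a normal functional by the flip is used through this lemma -/
theorem funcTensor_vec_vec (a b c d : H) (X : B H2) :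
    Q.funcTensor (vecFunctional H a b) (vecFunctional H c d) X =
      ⟪Q.tmul b d, X (Q.tmul a c)⟫ := by
  rw [← Q.sliceL_char, sliceL_vec]
  exact Q.inner_sl a b X d c

theorem sliceR_vec (ξ η : H) (X : B H2) : Q.sliceR (vecFunctional H ξ η) X = Q.sr ξ η X := by
  ext ν
  refine ext_inner_left ℂ fun μ => ?_
  have h1 := Q.sliceR_char (vecFunctional H ξ η) X ν μ
  rw [funcTensor_vec_vec] at h1
  rw [inner_sr]
  exact h1

theorem sliceL_hasSum (ω : B H →ₗ[ℂ] ℂ) {ξ η : ℕ → H} (h1 : Summable (fun n => ‖ξ n‖ ^ 2))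
    (h2 : Summable (fun n => ‖η n‖ ^ 2)) (h : ∀ x : B H, HasSum (fun n => ⟪η n, x (ξ n)⟫) (ω x))
    (X : B H2) : HasSum (fun n => Q.sl (ξ n) (η n) X) (Q.sliceL ω X) := by
  have hn : ∀ n, ‖Q.sl (ξ n) (η n) X‖ ≤ ‖X‖ * (‖η n‖ * ‖ξ n‖) := by
    intro n
    refine ContinuousLinearMap.opNorm_le_bound _ (by positivity) fun ν => ?_
    rw [sl_apply]
    have e1 := Q.Rd_norm (η n) (X (Q.tmul (ξ n) ν))
    have e2 := X.le_opNorm (Q.tmul (ξ n) ν)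
    rw [norm_tmul] at e2
    calc _ ≤ ‖η n‖ * ‖X (Q.tmul (ξ n) ν)‖ := e1
      _ ≤ ‖η n‖ * (‖X‖ * (‖ξ n‖ * ‖ν‖)) := by gcongr
      _ = _ := by ring
  have hs : Summable (fun n => Q.sl (ξ n) (η n) X) :=
    Summable.of_norm_bounded ((summable_norm_mul h1 h2).mul_left ‖X‖) hn
  have : ∑' n, Q.sl (ξ n) (η n) X = Q.sliceL ω X := by
    ext ν
    refine ext_inner_left ℂ fun μ => ?_
    have h3 := Q.funcTensor_hasSum ω h1 h2 h ν μ X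
    rw [← Q.sliceL_char] at h3
    have h4 : HasSum (fun n => ⟪μ, Q.sl (ξ n) (η n) X ν⟫) ⟪μ, (∑' n, Q.sl (ξ n) (η n) X) ν⟫ := by
      have h5 := hs.hasSum.mapL ((ContinuousLinearMap.apply ℂ H ν))
      exact h5.mapL (innerSL ℂ μ)
    simp only [inner_sl] at h4
    exact h4.unique h3
  rw [← this]
  exact hs.hasSum

end LCQG
end Tensor


section TensorE
variable {H H2 : Type*}
  [NormedAddCommGroup H] [InnerProductSpace ℂ H] [CompleteSpace H]
  [NormedAddCommGroup H2] [InnerProductSpace ℂ H2] [CompleteSpace H2]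

namespace LCQG
variable (Q : LCQG H H2)

theorem ext_sr {X Y : B H2} (h : ∀ ξ η, Q.sr ξ η X = Q.sr ξ η Y) : X = Y := by
  apply Q.ext_op
  intro a b c d
  rw [← inner_sr, ← inner_sr, h]

theorem ext_sl {X Y : B H2} (h : ∀ ξ η, Q.sl ξ η X = Q.sl ξ η Y) : X = Y := by
  apply Q.ext_op
  intro a b c d
  rw [← inner_sl, ← inner_sl, h]

theorem sr_mul_left (ξ η : H) (X : B H2) (y : B H) :
    Q.sr ξ η (Q.tensorOp y 1 * X) = y * Q.sr ξ η X := by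
  ext ν
  refine ext_inner_left ℂ fun μ => ?_
  rw [inner_sr, mapp, mapp, ← inner_star_left y, ← inner_star_left (Q.tensorOp _ _), tOp_star,
    Q.tensorOp_apply, inner_sr]
  simp

theorem sr_mul_right (ξ η : H) (X : B H2) (y : B H) :
    Q.sr ξ η (X * Q.tensorOp y 1) = Q.sr ξ η X * y := by
  ext ν
  refine ext_inner_left ℂ fun μ => ?_
  rw [inner_sr, mapp, mapp, Q.tensorOp_apply, inner_sr]
  simp

theorem sl_mul_left (ξ η : H) (X : B H2) (y : B H) :
    Q.sl ξ η (Q.tensorOp 1 y * X) = y * Q.sl ξ η X := by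
  ext ν
  refine ext_inner_left ℂ fun μ => ?_
  rw [inner_sl, mapp, mapp, ← inner_star_left y, ← inner_star_left (Q.tensorOp _ _), tOp_star,
    Q.tensorOp_apply, inner_sl]
  simp

theorem sl_mul_right (ξ η : H) (X : B H2) (y : B H) :
    Q.sl ξ η (X * Q.tensorOp 1 y) = Q.sl ξ η X * y := by
  ext ν
  refine ext_inner_left ℂ fun μ => ?_
  rw [inner_sl, mapp, mapp, Q.tensorOp_apply, inner_sl]
  simp

theorem sr_comm_iff (X : B H2) (y : B H) :
    Commute X (Q.tensorOp y 1) ↔ ∀ ξ η, Commute (Q.sr ξ η X) y := by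
  constructor
  · intro h ξ η
    have := congrArg (Q.sr ξ η) h.eq
    rwa [sr_mul_left, sr_mul_right] at this
  · intro h
    apply Q.ext_sr
    intro ξ η
    rw [sr_mul_left, sr_mul_right]
    exact (h ξ η).eq

theorem sl_comm_iff (X : B H2) (y : B H) :
    Commute X (Q.tensorOp 1 y) ↔ ∀ ξ η, Commute (Q.sl ξ η X) y := by
  constructor
  · intro h ξ η
    have := congrArg (Q.sl ξ η) h.eq
    rwa [sl_mul_left, sl_mul_right] at this
  · intro h
    apply Q.ext_sl
    intro ξ η
    rw [sl_mul_left, sl_mul_right]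
    exact (h ξ η).eq

/-- the opposite dual comultiplication -/
def dh (y : B H) : B H2 := Q.W * Q.tensorOp y 1 * star Q.W

theorem flip_conj (y : B H) : Q.flipU * Q.tensorOp 1 y * Q.flipU = Q.tensorOp y 1 := by
  apply Q.ext_tmul
  intro a b
  rw [mapp, mapp, Q.flipU_apply, Q.tensorOp_apply, Q.flipU_apply, Q.tensorOp_apply]

theorem Deltahat_eq (y : B H) : Q.Deltahat y = Q.flipU * Q.dh y * Q.flipU := by
  rw [Deltahat, What, dh, ← Q.flip_conj y]
  simp only [star_mul, star_star, flip_star, mul_assoc]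

theorem sl_flip (ξ η : H) (X : B H2) : Q.sl ξ η (Q.flipU * X * Q.flipU) = Q.sr ξ η X := by
  ext ν
  refine ext_inner_left ℂ fun μ => ?_
  rw [inner_sl, inner_sr, mapp, mapp, Q.flipU_apply, ← inner_star_left, flip_star, Q.flipU_apply]

theorem sr_flip (ξ η : H) (X : B H2) : Q.sr ξ η (Q.flipU * X * Q.flipU) = Q.sl ξ η X := by
  ext ν
  refine ext_inner_left ℂ fun μ => ?_
  rw [inner_sl, inner_sr, mapp, mapp, Q.flipU_apply, ← inner_star_left, flip_star, Q.flipU_apply]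

theorem W_comm_l (y : B H) (hy : y ∈ Q.M.commutant) : Commute Q.W (Q.tensorOp y 1) :=
  Q.W_mem y hy 1 (one_mem _)

theorem W_comm_r (y : B H) (hy : y ∈ Q.Mhat.commutant) : Commute Q.W (Q.tensorOp 1 y) :=
  Q.W_mem 1 (one_mem _) y hy

theorem sr_W_mem (ξ η : H) : Q.sr ξ η Q.W ∈ Q.M :=
  mem_of_comm fun y hy => (Q.sr_comm_iff _ _).mp (Q.W_comm_l y hy) ξ η

theorem sl_W_mem (ξ η : H) : Q.sl ξ η Q.W ∈ Q.Mhat :=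
  mem_of_comm fun y hy => (Q.sl_comm_iff _ _).mp (Q.W_comm_r y hy) ξ η

theorem sl_Delta_mem (ξ η : H) (x : B H) (hx : x ∈ Q.M) : Q.sl ξ η (Q.Delta x) ∈ Q.M := by
  rw [← sliceL_vec]
  exact Q.slice_Delta_mem _ x hx

theorem W_left (u v : H2) : ⟪Q.W u, Q.W v⟫ = ⟪u, v⟫ := by
  rw [← inner_star_right, ← mapp, Q.W_unitary_l]; rfl

theorem Ws_left (u v : H2) : ⟪(star Q.W) u, (star Q.W) v⟫ = ⟪u, v⟫ := by
  rw [inner_star_right, ← mapp, Q.W_unitary_r]; rfl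

theorem dh_mul (x y : B H) : Q.dh x * Q.dh y = Q.dh (x * y) := by
  rw [dh, dh, dh]
  calc _ = Q.W * Q.tensorOp x 1 * (star Q.W * Q.W) * Q.tensorOp y 1 * star Q.W := by
        simp only [mul_assoc]
    _ = _ := by rw [Q.W_unitary_l, mul_one, mul_assoc Q.W, tOp_mul, one_mul]

theorem dh_star (x : B H) : star (Q.dh x) = Q.dh (star x) := by
  rw [dh, dh]; simp [tOp_star, mul_assoc]

end LCQG

namespace DiscreteKacQG
variable (Q : DiscreteKacQG H H2)

theorem sr_dh_mem (ξ η : H) (y : B H) (hy : y ∈ Q.Mhat) : Q.sr ξ η (Q.dh y) ∈ Q.Mhat := by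
  have := Q.slice_Deltahat_memL (vecFunctional H ξ η) y hy
  rwa [LCQG.sliceL_vec, LCQG.Deltahat_eq, LCQG.sl_flip] at this

theorem sl_dh_mem (ξ η : H) (y : B H) (hy : y ∈ Q.Mhat) : Q.sl ξ η (Q.dh y) ∈ Q.Mhat := by
  have := Q.slice_Deltahat_memR (vecFunctional H ξ η) y hy
  rwa [LCQG.sliceR_vec, LCQG.Deltahat_eq, LCQG.sr_flip] at this

theorem ph_sr_dh (ξ η : H) (y : B H) (hy : y ∈ Q.Mhat) :
    Q.phihat (Q.sr ξ η (Q.dh y)) = ⟪η, ξ⟫ * Q.phihat y := by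
  have := Q.phihat_left_inv y hy (vecFunctional H ξ η) (LCQG.vec_normal ξ η)
  rwa [LCQG.sliceL_vec, LCQG.Deltahat_eq, LCQG.sl_flip] at this

theorem ph_sl_dh (ξ η : H) (y : B H) (hy : y ∈ Q.Mhat) :
    Q.phihat (Q.sl ξ η (Q.dh y)) = ⟪η, ξ⟫ * Q.phihat y := by
  have := Q.phihat_right_inv y hy (vecFunctional H ξ η) (LCQG.vec_normal ξ η)
  rwa [LCQG.sliceR_vec, LCQG.Deltahat_eq, LCQG.sr_flip] at this

/-- the cyclic trace vector -/
def x0 : H := Q.Lam 1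

theorem ph_eq (a : B H) (ha : a ∈ Q.Mhat) : Q.phihat a = ⟪Q.x0, a Q.x0⟫ := by
  rw [x0, Q.Lam_act a ha 1 (one_mem _), mul_one, Q.Lam_inner 1 (one_mem _) a ha]
  simp

theorem x0_norm : ‖Q.x0‖ = 1 := by
  have h := Q.ph_eq 1 (one_mem _)
  rw [Q.phihat_state.1, ContinuousLinearMap.one_def, ContinuousLinearMap.id_apply,
    inner_self_eq_norm_sq_to_K] at h
  have h2 : (1 : ℝ) = ‖Q.x0‖ ^ 2 := Complex.ofReal_injective (by simpa using h)
  nlinarith [norm_nonneg Q.x0]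

theorem tr_inner (a b : B H) (ha : a ∈ Q.Mhat) (hb : b ∈ Q.Mhat) :
    ⟪Q.x0, a (b Q.x0)⟫ = ⟪Q.x0, b (a Q.x0)⟫ := by
  rw [← mapp, ← mapp, ← Q.ph_eq _ (mul_mem ha hb), ← Q.ph_eq _ (mul_mem hb ha),
    Q.phihat_tracial a ha b hb]

theorem scalar_of_mem (y : B H) (h1 : y ∈ Q.M) (h2 : y ∈ Q.Mhat) : y = Q.phihat y • 1 := by
  have hV : Commute Q.V (Q.tensorOp y 1) := Q.V_mem y h2 1 (one_mem _)
  have hD := Q.Delta_V y h1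
  rw [hV.eq, mul_assoc (Q.tensorOp y 1), Q.V_unitary_r, mul_one] at hD
  have hd : Q.dh y = Q.tensorOp 1 y := by
    rw [LCQG.dh, ← hD]
    calc _ = (Q.W * star Q.W) * Q.tensorOp 1 y * (Q.W * star Q.W) := by simp only [mul_assoc]
      _ = _ := by rw [Q.W_unitary_r, one_mul, mul_one]
  have hs : ∀ ξ η, Q.sr ξ η (Q.tensorOp 1 y) = ⟪η, y ξ⟫ • (1 : B H) := by
    intro ξ η
    ext ν
    rw [LCQG.sr_apply, Q.tensorOp_apply, LCQG.Ld_tmul]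
    rfl
  ext ξ
  refine ext_inner_left ℂ fun η => ?_
  have := Q.ph_sr_dh ξ η y h2
  rw [hd, hs, map_smul, Q.phihat_state.1, smul_eq_mul, mul_one] at this
  rw [this, _root_.smul_apply, inner_smul_right, mul_comm]
  rfl

end DiscreteKacQG
end TensorE


section ColumnF
variable {K : Type*} [NormedAddCommGroup K] [InnerProductSpace ℂ K] [CompleteSpace K]
variable {ι : Type*}

/-- the isometric column operator with entries `T i` -/
def col (T : ι → B K) (hT : ∀ u, HasSum (fun i => ‖T i u‖ ^ 2) (‖u‖ ^ 2)) :
    K →ₗᵢ[ℂ] lp (fun _ : ι => K) 2 where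
  toFun u := ⟨fun i => T i u, by
    apply memℓp_gen
    simpa using (hT u).summable⟩
  map_add' u v := by
    ext i
    simp only [map_add]
    rfl
  map_smul' c u := by
    ext i
    simp
  norm_map' u := by
    have h1 := lp.hasSum_norm (p := 2) (by simp) (⟨fun i => T i u, by
      apply memℓp_gen
      simpa using (hT u).summable⟩ : lp (fun _ : ι => K) 2)
    have h2 := h1.unique (by simpa using hT u)
    have h3 : ‖(⟨fun i => T i u, by
      apply memℓp_gen
      simpa using (hT u).summable⟩ : lp (fun _ : ι => K) 2)‖ ^ 2 = ‖u‖ ^ 2 := by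
      simpa using h2
    exact (sq_eq_sq₀ (norm_nonneg _) (norm_nonneg _)).mp h3

theorem col_apply (T : ι → B K) (hT : ∀ u, HasSum (fun i => ‖T i u‖ ^ 2) (‖u‖ ^ 2)) (u : K)
    (i : ι) : (col T hT u) i = T i u := rfl

theorem col_hasSum (T S : ι → B K) (hT : ∀ u, HasSum (fun i => ‖T i u‖ ^ 2) (‖u‖ ^ 2))
    (hS : ∀ u, HasSum (fun i => ‖S i u‖ ^ 2) (‖u‖ ^ 2)) (u v : K) :
    HasSum (fun i => ⟪T i u, S i v⟫) ⟪col T hT u, col S hS v⟫ :=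
  lp.hasSum_inner (col T hT u) (col S hS v)

/-- `(col T)† (col S)` -/
def colMul (T S : ι → B K) (hT : ∀ u, HasSum (fun i => ‖T i u‖ ^ 2) (‖u‖ ^ 2))
    (hS : ∀ u, HasSum (fun i => ‖S i u‖ ^ 2) (‖u‖ ^ 2)) : B K :=
  ContinuousLinearMap.adjoint (col T hT).toContinuousLinearMap ∘L
    (col S hS).toContinuousLinearMap

theorem inner_colMul (T S : ι → B K) (hT : ∀ u, HasSum (fun i => ‖T i u‖ ^ 2) (‖u‖ ^ 2))
    (hS : ∀ u, HasSum (fun i => ‖S i u‖ ^ 2) (‖u‖ ^ 2)) (u v : K) :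
    ⟪u, colMul T S hT hS v⟫ = ⟪col T hT u, col S hS v⟫ := by
  rw [colMul, ContinuousLinearMap.comp_apply, ContinuousLinearMap.adjoint_inner_right]
  rfl

theorem colMul_hasSum (T S : ι → B K) (hT : ∀ u, HasSum (fun i => ‖T i u‖ ^ 2) (‖u‖ ^ 2))
    (hS : ∀ u, HasSum (fun i => ‖S i u‖ ^ 2) (‖u‖ ^ 2)) (u v : K) :
    HasSum (fun i => ⟪T i u, S i v⟫) ⟪u, colMul T S hT hS v⟫ := by
  rw [inner_colMul]
  exact col_hasSum T S hT hS u v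

theorem colMul_comm (T S : ι → B K) (hT : ∀ u, HasSum (fun i => ‖T i u‖ ^ 2) (‖u‖ ^ 2))
    (hS : ∀ u, HasSum (fun i => ‖S i u‖ ^ 2) (‖u‖ ^ 2)) (y : B K)
    (h1 : ∀ i, Commute (T i) (star y)) (h2 : ∀ i, Commute (S i) y) :
    Commute (colMul T S hT hS) y := by
  ext v
  refine ext_inner_left ℂ fun u => ?_
  rw [mapp, mapp, ← inner_star_left y]
  refine (colMul_hasSum T S hT hS _ _).unique ?_
  convert colMul_hasSum T S hT hS ((star y) u) v using 2 with i
  rw [← mapp (T i), (h1 i).eq, mapp, inner_star_left, ← mapp, ← mapp, (h2 i).eq]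

end ColumnF

section TensorF
variable {H H2 : Type*}
  [NormedAddCommGroup H] [InnerProductSpace ℂ H] [CompleteSpace H]
  [NormedAddCommGroup H2] [InnerProductSpace ℂ H2] [CompleteSpace H2]
variable {ι : Type*}

namespace LCQG
variable (Q : LCQG H H2) (e : HilbertBasis ι ℂ H)

theorem pb_orth : Orthonormal ℂ (fun p : ι × ι => Q.tmul (e p.1) (e p.2)) := by
  classical
  rw [orthonormal_iff_ite]
  rintro ⟨i, j⟩ ⟨i', j'⟩
  rw [Q.tmul_inner, orthonormal_iff_ite.mp e.orthonormal, orthonormal_iff_ite.mp e.orthonormal]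
  by_cases h : i = i' <;> by_cases h' : j = j' <;> simp [h, h']

theorem pb_dense : (⊤ : Submodule ℂ H2) ≤
    (Submodule.span ℂ (Set.range fun p : ι × ι => Q.tmul (e p.1) (e p.2))).topologicalClosure := by
  set S := (Submodule.span ℂ
    (Set.range fun p : ι × ι => Q.tmul (e p.1) (e p.2))).topologicalClosure with hS
  have hc : IsClosed (S : Set H2) := Submodule.isClosed_topologicalClosure _
  have key : ∀ (A : H →L[ℂ] H2), (∀ i, A (e i) ∈ S) → ∀ b, A b ∈ S := by
    intro A hA b
    have h1 : (Submodule.span ℂ (Set.range e)).topologicalClosure ≤ S.comap (A : H →ₗ[ℂ] H2) := by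
      apply Submodule.topologicalClosure_minimal
      · rw [Submodule.span_le]
        rintro _ ⟨i, rfl⟩
        exact hA i
      · exact hc.preimage A.continuous
    rw [e.dense_span] at h1
    exact h1 (Submodule.mem_top (x := b))
  have h1 : ∀ i b, Q.tmul (e i) b ∈ S := fun i => key (Q.Rk (e i)) fun c =>
    Submodule.le_topologicalClosure _ (Submodule.subset_span ⟨(i, c), rfl⟩)
  have h2 : ∀ b a, Q.tmul a b ∈ S := fun b => key (Q.Lk b) fun c => h1 c b
  rw [← Q.tmul_total]
  apply Submodule.topologicalClosure_minimal _ _ hc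
  rw [Submodule.span_le]
  rintro _ ⟨a, b, rfl⟩
  exact h2 b a

/-- the product Hilbert basis -/
def pb : HilbertBasis (ι × ι) ℂ H2 := HilbertBasis.mk (Q.pb_orth e) (Q.pb_dense e)

theorem pb_apply (p : ι × ι) : Q.pb e p = Q.tmul (e p.1) (e p.2) := by
  rw [pb, HilbertBasis.coe_mk]

theorem hasSum_Rd (u v : H2) : HasSum (fun i => ⟪Q.Rd (e i) u, Q.Rd (e i) v⟫) ⟪u, v⟫ := by
  have h := (Q.pb e).hasSum_inner_mul_inner u v
  refine h.prod_fiberwise fun i => ?_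
  convert e.hasSum_inner_mul_inner (Q.Rd (e i) u) (Q.Rd (e i) v) using 2 with c
  rw [pb_apply, Rd_inner, inner_Rd]

theorem hasSum_Ld (u v : H2) : HasSum (fun i => ⟪Q.Ld (e i) u, Q.Ld (e i) v⟫) ⟪u, v⟫ := by
  have h := (Equiv.hasSum_iff (Equiv.prodComm ι ι)).mpr ((Q.pb e).hasSum_inner_mul_inner u v)
  refine h.prod_fiberwise fun i => ?_
  convert e.hasSum_inner_mul_inner (Q.Ld (e i) u) (Q.Ld (e i) v) using 2 with c
  simp only [Function.comp, Equiv.prodComm_apply, Prod.fst_swap, Prod.snd_swap, Prod.swap]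
  rw [pb_apply, Ld_inner, inner_Ld]

theorem inner_self_norm {K : Type*} [NormedAddCommGroup K] [InnerProductSpace ℂ K] (v : K) :
    ⟪v, v⟫ = ((‖v‖ ^ 2 : ℝ) : ℂ) := by
  rw [inner_self_eq_norm_sq_to_K]
  simp

theorem hasSum_Rd_norm (u : H2) : HasSum (fun i => ‖Q.Rd (e i) u‖ ^ 2) (‖u‖ ^ 2) := by
  have h := Q.hasSum_Rd e u u
  simp only [inner_self_norm] at h
  exact_mod_cast h

theorem hasSum_Ld_norm (u : H2) : HasSum (fun i => ‖Q.Ld (e i) u‖ ^ 2) (‖u‖ ^ 2) := by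
  have h := Q.hasSum_Ld e u u
  simp only [inner_self_norm] at h
  exact_mod_cast h

theorem sl_star (ξ η : H) (X : B H2) : star (Q.sl ξ η X) = Q.sl η ξ (star X) := by
  ext ν
  refine ext_inner_left ℂ fun μ => ?_
  rw [inner_sl, inner_star_right, inner_star_right, ← inner_conj_symm, inner_sl, inner_conj_symm]

/-- matrix coefficients of `W` -/
def w (i : ι) (ξ : H) : B H := Q.sl ξ (e i) Q.W

theorem w_apply (i : ι) (ξ ν : H) : Q.w e i ξ ν = Q.Rd (e i) (Q.W (Q.tmul ξ ν)) := rfl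

theorem w_mem (i : ι) (ξ : H) : Q.w e i ξ ∈ Q.Mhat := Q.sl_W_mem _ _

theorem w_star (i : ι) (ξ : H) : star (Q.w e i ξ) = Q.sl (e i) ξ (star Q.W) := Q.sl_star _ _ _

theorem w_star_apply (i : ι) (ξ ν : H) :
    star (Q.w e i ξ) ν = Q.Rd ξ ((star Q.W) (Q.tmul (e i) ν)) := by
  rw [w_star, sl_apply]

theorem w_hasSum (ξ η μ ν : H) :
    HasSum (fun i => ⟪Q.w e i ξ μ, Q.w e i η ν⟫) (⟪ξ, η⟫ * ⟪μ, ν⟫) := by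
  have := Q.hasSum_Rd e (Q.W (Q.tmul ξ μ)) (Q.W (Q.tmul η ν))
  rwa [W_left, Q.tmul_inner] at this

theorem ws_hasSum (i i' : ι) (μ ν : H) :
    HasSum (fun j => ⟪star (Q.w e i (e j)) μ, star (Q.w e i' (e j)) ν⟫)
      (⟪e i, e i'⟫ * ⟪μ, ν⟫) := by
  have := Q.hasSum_Rd e ((star Q.W) (Q.tmul (e i) μ)) ((star Q.W) (Q.tmul (e i') ν))
  rw [Ws_left, Q.tmul_inner] at this
  simpa only [w_star_apply] using this

theorem Ld_tOp (c : H) (x : B H) (u : H2) : Q.Ld c (Q.tensorOp x 1 u) = x (Q.Ld c u) := by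
  have : Q.Ld c ∘L Q.tensorOp x 1 = x ∘L Q.Ld c := by
    apply Q.ext_tmul
    intro a b
    simp [Q.tensorOp_apply, Ld_tmul]
  exact congrArg (fun T : H2 →L[ℂ] H => T u) this

theorem Rd_tOp (c : H) (x : B H) (u : H2) : Q.Rd c (Q.tensorOp 1 x u) = x (Q.Rd c u) := by
  have : Q.Rd c ∘L Q.tensorOp 1 x = x ∘L Q.Rd c := by
    apply Q.ext_tmul
    intro a b
    simp [Q.tensorOp_apply, Rd_tmul]
  exact congrArg (fun T : H2 →L[ℂ] H => T u) this

/-- amplification of square-summable families -/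
theorem amp_norm (e : HilbertBasis ι ℂ H) {κ : Type*} (T : κ → B H)
    (hT : ∀ ν, HasSum (fun i => ‖T i ν‖ ^ 2) (‖ν‖ ^ 2)) (u : H2) :
    HasSum (fun i => ‖Q.tensorOp (T i) 1 u‖ ^ 2) (‖u‖ ^ 2) := by
  have h0 : ∀ i, HasSum (fun c => ‖T i (Q.Ld (e c) u)‖ ^ 2) (‖Q.tensorOp (T i) 1 u‖ ^ 2) := by
    intro i
    have := Q.hasSum_Ld_norm e (Q.tensorOp (T i) 1 u)
    simpa only [Ld_tOp] using this
  have hf : ∀ c, HasSum (fun i => ‖T i (Q.Ld (e c) u)‖ ^ 2) (‖Q.Ld (e c) u‖ ^ 2) :=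
    fun c => hT _
  have hs : Summable (fun p : ι × κ => ‖T p.2 (Q.Ld (e p.1) u)‖ ^ 2) := by
    rw [summable_prod_of_nonneg (fun p => by positivity)]
    refine ⟨fun c => (hf c).summable, ?_⟩
    simp only [(hf _).tsum_eq]
    exact (Q.hasSum_Ld_norm e u).summable
  have h1 := hs.hasSum
  have h2 := (h1.prod_fiberwise hf).unique (Q.hasSum_Ld_norm e u)
  rw [h2] at h1
  have h3 := (Equiv.hasSum_iff (Equiv.prodComm κ ι)).mpr h1
  exact h3.prod_fiberwise h0

end LCQG
end TensorF


section TensorG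
variable {H H2 : Type*}
  [NormedAddCommGroup H] [InnerProductSpace ℂ H] [CompleteSpace H]
  [NormedAddCommGroup H2] [InnerProductSpace ℂ H2] [CompleteSpace H2]
variable {ι : Type*}

namespace LCQG
variable (Q : LCQG H H2) (e : HilbertBasis ι ℂ H)

theorem Ws_norm (u : H2) : ‖(star Q.W) u‖ = ‖u‖ := by
  have h := Q.Ws_left u u
  rw [inner_self_norm, inner_self_norm] at h
  exact (sq_eq_sq₀ (norm_nonneg _) (norm_nonneg _)).mp (Complex.ofReal_injective h)

theorem W_norm (u : H2) : ‖Q.W u‖ = ‖u‖ := by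
  have h := Q.W_left u u
  rw [inner_self_norm, inner_self_norm] at h
  exact (sq_eq_sq₀ (norm_nonneg _) (norm_nonneg _)).mp (Complex.ofReal_injective h)

theorem dh_apply (y : B H) (u : H2) : Q.dh y u = Q.W (Q.tensorOp y 1 ((star Q.W) u)) := by
  rw [dh, mapp, mapp]

theorem amp_dh (e : HilbertBasis ι ℂ H) {κ : Type*} (T : κ → B H)
    (hT : ∀ ν, HasSum (fun i => ‖T i ν‖ ^ 2) (‖ν‖ ^ 2)) (u : H2) :
    HasSum (fun i => ‖Q.dh (T i) u‖ ^ 2) (‖u‖ ^ 2) := by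
  have := Q.amp_norm e T hT ((star Q.W) u)
  rw [Ws_norm] at this
  simpa only [dh_apply, W_norm] using this

theorem w_norm (ξ : H) (hξ : ‖ξ‖ = 1) (ν : H) :
    HasSum (fun i => ‖Q.w e i ξ ν‖ ^ 2) (‖ν‖ ^ 2) := by
  have h := Q.w_hasSum e ξ ξ ν ν
  simp only [inner_self_norm, hξ] at h
  norm_num at h
  exact_mod_cast h

theorem ws_norm (i : ι) (ν : H) :
    HasSum (fun j => ‖star (Q.w e i (e j)) ν‖ ^ 2) (‖ν‖ ^ 2) := by
  have h := Q.ws_hasSum e i i ν ν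
  simp only [inner_self_norm, e.orthonormal.1] at h
  norm_num at h
  exact_mod_cast h

theorem w_amp (ξ η : H) (hξ : ‖ξ‖ = 1) (hη : ‖η‖ = 1) (u v : H2) :
    HasSum (fun i => ⟪Q.tensorOp (Q.w e i ξ) 1 u, Q.tensorOp (Q.w e i η) 1 v⟫)
      (⟪ξ, η⟫ * ⟪u, v⟫) := by
  have h1 := Q.amp_norm e (fun i => Q.w e i ξ) (Q.w_norm e ξ hξ)
  have h2 := Q.amp_norm e (fun i => Q.w e i η) (Q.w_norm e η hη)
  have key : colMul _ _ h1 h2 = ⟪ξ, η⟫ • (1 : B H2) := by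
    apply Q.ext_op
    intro a b c d
    refine (colMul_hasSum _ _ h1 h2 _ _).unique ?_
    have h3 := (Q.w_hasSum e ξ η a c).mul_right ⟪b, d⟫
    rw [_root_.smul_apply, inner_smul_right]
    change HasSum _ (⟪ξ, η⟫ * ⟪Q.tmul a b, Q.tmul c d⟫)
    rw [Q.tmul_inner, ← mul_assoc]
    simp only [Q.tensorOp_apply, Q.tmul_inner]
    exact h3
  have := colMul_hasSum _ _ h1 h2 u v
  rw [key, _root_.smul_apply, inner_smul_right] at this
  exact this

theorem w_dh (ξ η : H) (hξ : ‖ξ‖ = 1) (hη : ‖η‖ = 1) (u v : H2) :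
    HasSum (fun i => ⟪Q.dh (Q.w e i ξ) u, Q.dh (Q.w e i η) v⟫) (⟪ξ, η⟫ * ⟪u, v⟫) := by
  have := Q.w_amp e ξ η hξ hη ((star Q.W) u) ((star Q.W) v)
  rw [Ws_left] at this
  simpa only [dh_apply, W_left] using this

/-- the intertwiner -/
def A (ξ η : H) (hξ : ‖ξ‖ = 1) (hη : ‖η‖ = 1) : B H2 :=
  colMul (fun i => Q.tensorOp (Q.w e i ξ) 1) (fun i => Q.dh (Q.w e i η))
    (Q.amp_norm e _ (Q.w_norm e ξ hξ)) (Q.amp_dh e _ (Q.w_norm e η hη))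

theorem A_hasSum (ξ η : H) (hξ : ‖ξ‖ = 1) (hη : ‖η‖ = 1) (u v : H2) :
    HasSum (fun i => ⟪Q.tensorOp (Q.w e i ξ) 1 u, Q.dh (Q.w e i η) v⟫)
      ⟪u, Q.A e ξ η hξ hη v⟫ :=
  colMul_hasSum _ _ _ _ _ _

theorem sr_AW (ξ η : H) (hξ : ‖ξ‖ = 1) (hη : ‖η‖ = 1) (a b : H) :
    Q.sr a b (Q.A e ξ η hξ hη * Q.W) = Q.sl η ξ (Q.Delta (Q.sr a b Q.W)) := by
  ext ν
  refine ext_inner_left ℂ fun μ => ?_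
  rw [inner_sr, inner_sl, mapp]
  refine (Q.A_hasSum e ξ η hξ hη _ _).unique ?_
  rw [Delta, mapp, mapp, inner_star_right]
  convert Q.hasSum_Rd e _ _ using 2 with i
  rw [Q.tensorOp_apply, Rd_tOp, ← w_apply, ← w_apply, inner_sr, dh_apply, ← mapp (star Q.W),
    Q.W_unitary_l]
  change ⟪_, Q.W (Q.tensorOp (Q.w e i η) 1 (Q.tmul ν a))⟫ = _
  rw [Q.tensorOp_apply]
  rfl

theorem A_comm_M (ξ η : H) (hξ : ‖ξ‖ = 1) (hη : ‖η‖ = 1) (y : B H) (hy : y ∈ Q.M.commutant) :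
    Commute (Q.A e ξ η hξ hη) (Q.tensorOp y 1) := by
  have h1 : Commute (Q.A e ξ η hξ hη * Q.W) (Q.tensorOp y 1) := by
    rw [sr_comm_iff]
    intro a b
    rw [sr_AW]
    exact comm_of_mem (Q.sl_Delta_mem _ _ _ (Q.sr_W_mem _ _)) hy
  have h2 : Commute (star Q.W) (Q.tensorOp y 1) := by
    have h3 := Q.W_comm_l (star y) (star_mem hy)
    have h4 := h3.star_star
    rwa [tOp_star, star_star, star_one] at h4
  have h5 := h1.mul_left h2
  rwa [mul_assoc, Q.W_unitary_r, mul_one] at h5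

end LCQG

namespace DiscreteKacQG
variable (Q : DiscreteKacQG H H2) (e : HilbertBasis ι ℂ H)

theorem dh_comm_l (x : B H) (hx : x ∈ Q.Mhat) (y : B H) (hy : y ∈ Q.Mhat.commutant) :
    Commute (Q.dh x) (Q.tensorOp y 1) := by
  rw [LCQG.sr_comm_iff]
  intro a b
  exact comm_of_mem (Q.sr_dh_mem _ _ _ hx) hy

theorem dh_comm_r (x : B H) (hx : x ∈ Q.Mhat) (y : B H) (hy : y ∈ Q.Mhat.commutant) :
    Commute (Q.dh x) (Q.tensorOp 1 y) := by
  rw [LCQG.sl_comm_iff]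
  intro a b
  exact comm_of_mem (Q.sl_dh_mem _ _ _ hx) hy

theorem A_comm_l (ξ η : H) (hξ : ‖ξ‖ = 1) (hη : ‖η‖ = 1) (y : B H)
    (hy : y ∈ Q.Mhat.commutant) : Commute (Q.A e ξ η hξ hη) (Q.tensorOp y 1) := by
  apply colMul_comm
  · intro i
    rw [LCQG.tOp_star, star_one, Commute, SemiconjBy, LCQG.tOp_mul, LCQG.tOp_mul,
      (comm_of_mem (Q.w_mem e i ξ) (star_mem hy)).eq]
  · intro i
    exact Q.dh_comm_l _ (Q.w_mem e i η) y hy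

theorem A_comm_r (ξ η : H) (hξ : ‖ξ‖ = 1) (hη : ‖η‖ = 1) (y : B H)
    (hy : y ∈ Q.Mhat.commutant) : Commute (Q.A e ξ η hξ hη) (Q.tensorOp 1 y) := by
  apply colMul_comm
  · intro i
    rw [LCQG.tOp_star, star_one, Commute, SemiconjBy, LCQG.tOp_mul, LCQG.tOp_mul, one_mul, mul_one,
      one_mul, mul_one]
  · intro i
    exact Q.dh_comm_r _ (Q.w_mem e i η) y hy

/-- the right leg of the intertwiner -/
def t (ξ η : H) (hξ : ‖ξ‖ = 1) (hη : ‖η‖ = 1) : B H := Q.sl Q.x0 Q.x0 (Q.A e ξ η hξ hη)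

theorem t_mem (ξ η : H) (hξ : ‖ξ‖ = 1) (hη : ‖η‖ = 1) : Q.t e ξ η hξ hη ∈ Q.Mhat :=
  mem_of_comm fun y hy => (Q.sl_comm_iff _ _).mp (Q.A_comm_r e ξ η hξ hη y hy) _ _

theorem A_eq (ξ η : H) (hξ : ‖ξ‖ = 1) (hη : ‖η‖ = 1) :
    Q.A e ξ η hξ hη = Q.tensorOp 1 (Q.t e ξ η hξ hη) := by
  have hs : ∀ a b, Q.sr a b (Q.A e ξ η hξ hη) =
      Q.phihat (Q.sr a b (Q.A e ξ η hξ hη)) • 1 := by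
    intro a b
    apply Q.scalar_of_mem
    · exact mem_of_comm fun y hy => (Q.sr_comm_iff _ _).mp (Q.A_comm_M e ξ η hξ hη y hy) _ _
    · exact mem_of_comm fun y hy => (Q.sr_comm_iff _ _).mp (Q.A_comm_l e ξ η hξ hη y hy) _ _
  have h1 : ∀ a b μ ν, ⟪Q.tmul μ b, Q.A e ξ η hξ hη (Q.tmul ν a)⟫ =
      Q.phihat (Q.sr a b (Q.A e ξ η hξ hη)) * ⟪μ, ν⟫ := by
    intro a b μ ν
    rw [← LCQG.inner_sr]
    conv_lhs => rw [hs a b]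
    rw [_root_.smul_apply, inner_smul_right]
    rfl
  apply Q.ext_op
  intro μ b ν a
  rw [Q.tensorOp_apply, Q.tmul_inner, h1, t, LCQG.inner_sl, h1, LCQG.inner_self_norm, x0_norm]
  simp [mul_comm]

end DiscreteKacQG
end TensorG


section IsoH
variable {X Y : Type*} [NormedAddCommGroup X] [InnerProductSpace ℂ X] [CompleteSpace X]
  [NormedAddCommGroup Y] [InnerProductSpace ℂ Y] [CompleteSpace Y] {κ : Type*}

theorem iso_defect (K : κ → X →ₗᵢ[ℂ] Y) (hK : OrthogonalFamily ℂ (fun _ => X) K) (g : Y)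
    (F : Finset κ) :
    ‖g - ∑ j ∈ F, K j (ContinuousLinearMap.adjoint (K j).toContinuousLinearMap g)‖ ^ 2 =
    ‖g‖ ^ 2 - ∑ j ∈ F, ‖ContinuousLinearMap.adjoint (K j).toContinuousLinearMap g‖ ^ 2 := by
  have h1 := hK.norm_sum (fun j => ContinuousLinearMap.adjoint (K j).toContinuousLinearMap g) F
  rw [@norm_sub_sq ℂ, h1, inner_sum, map_sum]
  have h2 : ∀ j ∈ F, RCLike.re ⟪g, K j (ContinuousLinearMap.adjoint
      (K j).toContinuousLinearMap g)⟫ =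
      ‖ContinuousLinearMap.adjoint (K j).toContinuousLinearMap g‖ ^ 2 := by
    intro j _
    have : ⟪g, K j (ContinuousLinearMap.adjoint (K j).toContinuousLinearMap g)⟫ =
      ⟪ContinuousLinearMap.adjoint (K j).toContinuousLinearMap g,
        ContinuousLinearMap.adjoint (K j).toContinuousLinearMap g⟫ := by
      conv_rhs => rw [ContinuousLinearMap.adjoint_inner_left]
      rfl
    rw [this, inner_self_eq_norm_sq (𝕜 := ℂ)]
  rw [Finset.sum_congr rfl h2]
  ring

theorem iso_bessel (K : κ → X →ₗᵢ[ℂ] Y) (hK : OrthogonalFamily ℂ (fun _ => X) K) (g : Y)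
    (F : Finset κ) :
    ∑ j ∈ F, ‖ContinuousLinearMap.adjoint (K j).toContinuousLinearMap g‖ ^ 2 ≤ ‖g‖ ^ 2 := by
  have := iso_defect K hK g F
  nlinarith [sq_nonneg ‖g - ∑ j ∈ F, K j (ContinuousLinearMap.adjoint
    (K j).toContinuousLinearMap g)‖]

theorem iso_pars (K : κ → X →ₗᵢ[ℂ] Y) (hK : OrthogonalFamily ℂ (fun _ => X) K) (g h : Y)
    (hg : HasSum (fun j => ‖ContinuousLinearMap.adjoint (K j).toContinuousLinearMap g‖ ^ 2)
      (‖g‖ ^ 2)) :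
    HasSum (fun j => ⟪ContinuousLinearMap.adjoint (K j).toContinuousLinearMap g,
      ContinuousLinearMap.adjoint (K j).toContinuousLinearMap h⟫) ⟪g, h⟫ := by
  have h1 : HasSum (fun j => K j (ContinuousLinearMap.adjoint
      (K j).toContinuousLinearMap g)) g := by
    rw [HasSum, tendsto_iff_norm_sub_tendsto_zero]
    have h2 : Filter.Tendsto (fun F : Finset κ => ‖g‖ ^ 2 -
        ∑ j ∈ F, ‖ContinuousLinearMap.adjoint (K j).toContinuousLinearMap g‖ ^ 2)
        Filter.atTop (nhds 0) := by
      have := (tendsto_const_nhds (x := ‖g‖ ^ 2)).sub hg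
      simpa using this
    simp only [← iso_defect K hK g] at h2
    have h3 := (Real.continuous_sqrt.tendsto 0).comp h2
    simp only [Real.sqrt_zero] at h3
    refine h3.congr fun F => ?_
    simp only [Function.comp]
    rw [Real.sqrt_sq (norm_nonneg _), norm_sub_rev]
  have h4 := (innerSL ℂ h).hasSum h1
  have h5 := (Complex.hasSum_conj'.mpr h4)
  simp only [innerSL_apply_apply, inner_conj_symm] at h5
  convert h5 using 2 with j
  rw [ContinuousLinearMap.adjoint_inner_right]
  rfl

end IsoH

section TensorH
variable {H H2 : Type*}
  [NormedAddCommGroup H] [InnerProductSpace ℂ H] [CompleteSpace H]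
  [NormedAddCommGroup H2] [InnerProductSpace ℂ H2] [CompleteSpace H2]
variable {ι : Type*}

namespace LCQG
variable (Q : LCQG H H2) (e : HilbertBasis ι ℂ H)

/-- column isometries of the amplified matrix -/
def Kc (j : ι) : H2 →ₗᵢ[ℂ] lp (fun _ : ι => H2) 2 :=
  col (fun i => Q.dh (Q.w e i (e j))) (Q.amp_dh e _ (Q.w_norm e (e j) (e.orthonormal.1 j)))

theorem Kc_orth : OrthogonalFamily ℂ (fun _ => H2) (Q.Kc e) := by
  intro j l hjl u v
  have h1 := col_hasSum _ _ (Q.amp_dh e _ (Q.w_norm e (e j) (e.orthonormal.1 j)))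
    (Q.amp_dh e _ (Q.w_norm e (e l) (e.orthonormal.1 l))) u v
  have h2 := h1.unique (Q.w_dh e (e j) (e l) (e.orthonormal.1 j) (e.orthonormal.1 l) u v)
  rw [e.orthonormal.2 hjl, zero_mul] at h2
  exact h2

theorem Kc_single [DecidableEq ι] (i j : ι) (v : H2) :
    ContinuousLinearMap.adjoint (Q.Kc e j).toContinuousLinearMap (lp.single 2 i v) =
      Q.dh (star (Q.w e i (e j))) v := by
  refine ext_inner_right ℂ fun u => ?_
  rw [ContinuousLinearMap.adjoint_inner_left]
  change ⟪_, Q.Kc e j u⟫ = _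
  rw [lp.inner_single_left, ← dh_star, inner_star_left]
  rfl

theorem Kc_col (j : ι) (ξ : H) (hξ : ‖ξ‖ = 1) (u : H2) :
    ContinuousLinearMap.adjoint (Q.Kc e j).toContinuousLinearMap
      (col (fun i => Q.tensorOp (Q.w e i ξ) 1) (Q.amp_norm e _ (Q.w_norm e ξ hξ)) u) =
      star (Q.A e ξ (e j) hξ (e.orthonormal.1 j)) u := by
  refine ext_inner_right ℂ fun v => ?_
  rw [ContinuousLinearMap.adjoint_inner_left, inner_star_left, A, inner_colMul]
  rfl

theorem A_bessel (ξ : H) (hξ : ‖ξ‖ = 1) (u : H2) (F : Finset ι) :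
    ∑ j ∈ F, ‖star (Q.A e ξ (e j) hξ (e.orthonormal.1 j)) u‖ ^ 2 ≤ ‖u‖ ^ 2 := by
  have := iso_bessel _ (Q.Kc_orth e)
    (col (fun i => Q.tensorOp (Q.w e i ξ) 1) (Q.amp_norm e _ (Q.w_norm e ξ hξ)) u) F
  simpa only [Q.Kc_col e _ ξ hξ u, LinearIsometry.norm_map] using this

theorem A_pars (ξ : H) (hξ : ‖ξ‖ = 1) (i : ι) (u v : H2) :
    HasSum (fun j => ⟪Q.dh (star (Q.w e i (e j))) v,
      star (Q.A e ξ (e j) hξ (e.orthonormal.1 j)) u⟫) ⟪v, Q.tensorOp (Q.w e i ξ) 1 u⟫ := by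
  classical
  have h1 := iso_pars _ (Q.Kc_orth e) (lp.single 2 i v)
    (col (fun i => Q.tensorOp (Q.w e i ξ) 1) (Q.amp_norm e _ (Q.w_norm e ξ hξ)) u) (by
      simp only [Kc_single]
      rw [lp.norm_single (by simp)]
      exact Q.amp_dh e _ (Q.ws_norm e i) v)
  rw [lp.inner_single_left] at h1
  simpa only [Kc_single, Q.Kc_col e _ ξ hξ u, col_apply] using h1

end LCQG

namespace DiscreteKacQG
variable (Q : DiscreteKacQG H H2) (e : HilbertBasis ι ℂ H)

/-- shorthand -/
def tj (ξ : H) (hξ : ‖ξ‖ = 1) (j : ι) : B H := Q.t e ξ (e j) hξ (e.orthonormal.1 j)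

theorem tj_mem (ξ : H) (hξ : ‖ξ‖ = 1) (j : ι) : Q.tj e ξ hξ j ∈ Q.Mhat := Q.t_mem _ _ _ _ _

theorem tj_norm (ξ : H) (hξ : ‖ξ‖ = 1) (F : Finset ι) :
    ∑ j ∈ F, ‖Q.tj e ξ hξ j Q.x0‖ ^ 2 ≤ 1 := by
  have h := Q.A_bessel e ξ hξ (Q.tmul Q.x0 Q.x0) F
  rw [LCQG.norm_tmul, x0_norm] at h
  have h1 : ∀ j ∈ F, ‖Q.tj e ξ hξ j Q.x0‖ ^ 2 =
      ‖star (Q.A e ξ (e j) hξ (e.orthonormal.1 j)) (Q.tmul Q.x0 Q.x0)‖ ^ 2 := by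
    intro j _
    rw [A_eq, LCQG.tOp_star, Q.tensorOp_apply, LCQG.norm_tmul, star_one]
    change _ = (‖Q.x0‖ * ‖star (Q.tj e ξ hξ j) Q.x0‖) ^ 2
    rw [x0_norm, one_mul]
    have h2 := Q.tr_inner (star (Q.tj e ξ hξ j)) (Q.tj e ξ hξ j) (star_mem (Q.tj_mem e ξ hξ j))
      (Q.tj_mem e ξ hξ j)
    rw [inner_star_right, ← inner_star_left (Q.tj e ξ hξ j) Q.x0 (star (Q.tj e ξ hξ j) Q.x0),
      LCQG.inner_self_norm, LCQG.inner_self_norm] at h2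
    exact Complex.ofReal_injective h2
  rw [Finset.sum_congr rfl h1]
  linarith

theorem rep (ξ : H) (hξ : ‖ξ‖ = 1) (i : ι) (v ζ : H) :
    HasSum (fun j => ⟪Q.tmul v (Q.tj e ξ hξ j Q.x0), Q.dh (Q.w e i (e j)) (Q.tmul ζ Q.x0)⟫)
      ⟪v, Q.w e i ξ ζ⟫ := by
  have h := Q.A_pars e ξ hξ i (Q.tmul ζ Q.x0) (Q.tmul v Q.x0)
  rw [Q.tensorOp_apply, Q.tmul_inner] at h
  change HasSum _ (_ * ⟪Q.x0, Q.x0⟫) at h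
  rw [LCQG.inner_self_norm, x0_norm] at h
  norm_num at h
  convert h using 2 with j
  rw [A_eq, LCQG.tOp_star, Q.tensorOp_apply, ← LCQG.dh_star, inner_star_left, star_one]
  change _ = ⟪_, Q.dh _ (Q.tmul ζ (star (Q.tj e ξ hξ j) Q.x0))⟫
  rw [← LCQG.inner_sl, ← LCQG.inner_sl, Q.tr_inner _ _ (Q.sl_dh_mem _ _ _ (Q.w_mem e i (e j)))
    (star_mem (Q.tj_mem e ξ hξ j)), inner_star_right]

theorem gj_norm (F : Finset ι) (ζ : ι → H) :
    HasSum (fun j => ‖∑ i ∈ F, Q.dh (Q.w e i (e j)) (Q.tmul (ζ i) Q.x0)‖ ^ 2)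
      (∑ i ∈ F, ‖ζ i‖ ^ 2) := by
  classical
  have h1 : HasSum (fun j => ∑ i ∈ F, ∑ i' ∈ F,
      ⟪star (Q.w e i' (e j)) Q.x0, star (Q.w e i (e j)) Q.x0⟫ * ⟪ζ i, ζ i'⟫)
      (∑ i ∈ F, ∑ i' ∈ F, (⟪e i', e i⟫ * ⟪Q.x0, Q.x0⟫) * ⟪ζ i, ζ i'⟫) :=
    hasSum_sum fun i _ => hasSum_sum fun i' _ => (Q.ws_hasSum e i' i Q.x0 Q.x0).mul_right _
  have h2 : (∑ i ∈ F, ∑ i' ∈ F, (⟪e i', e i⟫ * ⟪Q.x0, Q.x0⟫) * ⟪ζ i, ζ i'⟫) =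
      ((∑ i ∈ F, ‖ζ i‖ ^ 2 : ℝ) : ℂ) := by
    rw [Complex.ofReal_sum]
    refine Finset.sum_congr rfl fun i hi => ?_
    rw [Finset.sum_eq_single i]
    · rw [LCQG.inner_self_norm, LCQG.inner_self_norm, LCQG.inner_self_norm, x0_norm,
        e.orthonormal.1]
      simp
    · intro b _ hb
      rw [e.orthonormal.2 hb]
      simp
    · exact fun h => absurd hi h
  rw [h2] at h1
  have h3 : ∀ j, ∑ i ∈ F, ∑ i' ∈ F,
      ⟪star (Q.w e i' (e j)) Q.x0, star (Q.w e i (e j)) Q.x0⟫ * ⟪ζ i, ζ i'⟫ =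
      ((‖∑ i ∈ F, Q.dh (Q.w e i (e j)) (Q.tmul (ζ i) Q.x0)‖ ^ 2 : ℝ) : ℂ) := by
    intro j
    rw [← LCQG.inner_self_norm, sum_inner]
    refine Finset.sum_congr rfl fun i hi => ?_
    rw [inner_sum]
    refine Finset.sum_congr rfl fun i' hi' => ?_
    have hm : star (Q.w e i (e j)) * Q.w e i' (e j) ∈ Q.Mhat :=
      mul_mem (star_mem (Q.w_mem e i _)) (Q.w_mem e i' _)
    rw [← inner_star_right (Q.dh _), LCQG.dh_star, ← mapp (Q.dh _), LCQG.dh_mul, ← LCQG.inner_sl,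
      ← Q.ph_eq _ (Q.sl_dh_mem _ _ _ hm), Q.ph_sl_dh _ _ _ hm,
      Q.phihat_tracial _ (star_mem (Q.w_mem e i _)) _ (Q.w_mem e i' _),
      Q.ph_eq _ (mul_mem (Q.w_mem e i' _) (star_mem (Q.w_mem e i _))), mapp, inner_star_left,
      mul_comm]
  simp only [h3] at h1
  exact_mod_cast h1

theorem row_contr (ξ : H) (hξ : ‖ξ‖ = 1) (F : Finset ι) (ζ : ι → H) :
    ‖∑ i ∈ F, Q.w e i ξ (ζ i)‖ ^ 2 ≤ ∑ i ∈ F, ‖ζ i‖ ^ 2 := by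
  set v := ∑ i ∈ F, Q.w e i ξ (ζ i) with hv
  set C := ∑ i ∈ F, ‖ζ i‖ ^ 2 with hC
  have h1 : HasSum (fun j => ⟪Q.tmul v (Q.tj e ξ hξ j Q.x0),
      ∑ i ∈ F, Q.dh (Q.w e i (e j)) (Q.tmul (ζ i) Q.x0)⟫) ⟪v, v⟫ := by
    have := hasSum_sum (s := F) fun i _ => Q.rep e ξ hξ i v (ζ i)
    simpa only [← inner_sum, ← hv] using this
  have h2 := Complex.hasSum_re h1
  rw [LCQG.inner_self_norm, Complex.ofReal_re] at h2
  have h3 : ‖v‖ ^ 2 ≤ (‖v‖ ^ 2 + C) / 2 := by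
    refine hasSum_le_of_sum_le h2 fun G => ?_
    have hg := sum_le_hasSum G (fun j _ => by positivity) (Q.gj_norm e F ζ)
    have ht := Q.tj_norm e ξ hξ G
    have hb : ∀ j ∈ G, (⟪Q.tmul v (Q.tj e ξ hξ j Q.x0),
        ∑ i ∈ F, Q.dh (Q.w e i (e j)) (Q.tmul (ζ i) Q.x0)⟫).re ≤
        ‖v‖ ^ 2 / 2 * ‖Q.tj e ξ hξ j Q.x0‖ ^ 2 +
        1 / 2 * ‖∑ i ∈ F, Q.dh (Q.w e i (e j)) (Q.tmul (ζ i) Q.x0)‖ ^ 2 := by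
      intro j _
      have h4 := re_inner_le_norm (𝕜 := ℂ) (Q.tmul v (Q.tj e ξ hξ j Q.x0))
        (∑ i ∈ F, Q.dh (Q.w e i (e j)) (Q.tmul (ζ i) Q.x0))
      rw [LCQG.norm_tmul] at h4
      change (⟪_, _⟫).re ≤ _ at h4
      nlinarith [sq_nonneg (‖v‖ * ‖Q.tj e ξ hξ j Q.x0‖ -
        ‖∑ i ∈ F, Q.dh (Q.w e i (e j)) (Q.tmul (ζ i) Q.x0)‖)]
    refine (Finset.sum_le_sum hb).trans ?_
    rw [Finset.sum_add_distrib, ← Finset.mul_sum, ← Finset.mul_sum]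
    nlinarith [mul_le_mul_of_nonneg_left ht (by positivity : 0 ≤ ‖v‖ ^ 2 / 2)]
  linarith

theorem row_le (ξ : H) (hξ : ‖ξ‖ = 1) (F : Finset ι) (ζ : H) :
    ∑ i ∈ F, ‖star (Q.w e i ξ) ζ‖ ^ 2 ≤ ‖ζ‖ ^ 2 := by
  have h1 := Q.row_contr e ξ hξ F (fun i => star (Q.w e i ξ) ζ)
  set v := ∑ i ∈ F, Q.w e i ξ (star (Q.w e i ξ) ζ) with hv
  have h2 : ⟪ζ, v⟫ = ((∑ i ∈ F, ‖star (Q.w e i ξ) ζ‖ ^ 2 : ℝ) : ℂ) := by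
    rw [hv, inner_sum, Complex.ofReal_sum]
    refine Finset.sum_congr rfl fun i _ => ?_
    rw [← inner_star_left, LCQG.inner_self_norm]
  have h3 := re_inner_le_norm (𝕜 := ℂ) ζ v
  rw [h2] at h3
  have h4 : ∑ i ∈ F, ‖star (Q.w e i ξ) ζ‖ ^ 2 ≤ ‖ζ‖ * ‖v‖ := by
    simpa only [RCLike.re_eq_complex_re, Complex.ofReal_re] using h3
  nlinarith [sq_nonneg (‖ζ‖ - ‖v‖)]

end DiscreteKacQG
end TensorH


section TensorI
variable {H H2 : Type*}
  [NormedAddCommGroup H] [InnerProductSpace ℂ H] [CompleteSpace H]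
  [NormedAddCommGroup H2] [InnerProductSpace ℂ H2] [CompleteSpace H2]
variable {ι : Type*}

namespace LCQG
variable (Q : LCQG H H2) (e : HilbertBasis ι ℂ H)

theorem sl_add_left (a b η : H) (X : B H2) : Q.sl (a + b) η X = Q.sl a η X + Q.sl b η X := by
  ext ν
  simp [sl_apply]

theorem sl_smul_left (c : ℂ) (a η : H) (X : B H2) : Q.sl (c • a) η X = c • Q.sl a η X := by
  ext ν
  simp [sl_apply]

theorem sl_add_right (ξ a b : H) (X : B H2) : Q.sl ξ (a + b) X = Q.sl ξ a X + Q.sl ξ b X := by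
  ext ν
  refine ext_inner_left ℂ fun μ => ?_
  rw [_root_.add_apply, inner_add_right]
  simp only [inner_sl, map_add, LinearMap.add_apply, inner_add_left]

theorem sl_smul_right (c : ℂ) (ξ a : H) (X : B H2) :
    Q.sl ξ (c • a) X = (starRingEnd ℂ c) • Q.sl ξ a X := by
  ext ν
  refine ext_inner_left ℂ fun μ => ?_
  rw [_root_.smul_apply, inner_smul_right]
  simp only [inner_sl, map_smul, LinearMap.smul_apply, inner_smul_left]

theorem sl_Delta_inner (ξ η : H) (x : B H) (μ ν : H) :
    ⟪μ, Q.sl ξ η (Q.Delta x) ν⟫ =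
      ⟪Q.W (Q.tmul η μ), Q.tensorOp 1 x (Q.W (Q.tmul ξ ν))⟫ := by
  rw [inner_sl, Delta, mapp, mapp, inner_star_right]

theorem sl_Delta_add (ξ η : H) (x y : B H) :
    Q.sl ξ η (Q.Delta (x + y)) = Q.sl ξ η (Q.Delta x) + Q.sl ξ η (Q.Delta y) := by
  ext ν
  refine ext_inner_left ℂ fun μ => ?_
  rw [_root_.add_apply, inner_add_right]
  simp only [sl_Delta_inner, map_add, _root_.add_apply, inner_add_right]

theorem sl_Delta_smul (ξ η : H) (c : ℂ) (x : B H) :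
    Q.sl ξ η (Q.Delta (c • x)) = c • Q.sl ξ η (Q.Delta x) := by
  ext ν
  refine ext_inner_left ℂ fun μ => ?_
  rw [_root_.smul_apply, inner_smul_right]
  simp only [sl_Delta_inner, map_smul, _root_.smul_apply, inner_smul_right]

theorem sl_Delta_one (ξ η : H) : Q.sl ξ η (Q.Delta 1) = ⟪η, ξ⟫ • 1 := by
  ext ν
  refine ext_inner_left ℂ fun μ => ?_
  rw [_root_.smul_apply, inner_smul_right, sl_Delta_inner, tOp_one]
  change ⟪_, Q.W _⟫ = _
  rw [W_left, Q.tmul_inner]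
  rfl

theorem sl_Delta_star (ξ : H) (x : B H) (hx : star x = x) :
    star (Q.sl ξ ξ (Q.Delta x)) = Q.sl ξ ξ (Q.Delta x) := by
  rw [sl_star, Delta]
  simp [tOp_star, hx, mul_assoc]

theorem sl_Delta_hasSum (ξ ζ : H) (x : B H) :
    HasSum (fun i => ⟪Q.w e i ξ ζ, x (Q.w e i ξ ζ)⟫) ⟪ζ, Q.sl ξ ξ (Q.Delta x) ζ⟫ := by
  rw [sl_Delta_inner]
  have := Q.hasSum_Rd e (Q.W (Q.tmul ξ ζ)) (Q.tensorOp 1 x (Q.W (Q.tmul ξ ζ)))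
  simpa only [Rd_tOp, ← w_apply] using this

theorem sl_Delta_pos (ξ : H) (x : B H) (hx : x.IsPositive) :
    (Q.sl ξ ξ (Q.Delta x)).IsPositive := by
  obtain ⟨s, e, _⟩ := exists_hilbertBasis ℂ H
  have hs : star x = x := hx.isSelfAdjoint
  refine isPos_of _ (Q.sl_Delta_star ξ x hs) fun ζ => ?_
  have h := Complex.hasSum_re (Q.sl_Delta_hasSum e ξ ζ x)
  exact h.nonneg fun i => hx.re_inner_nonneg_right _

theorem dom (ξ : H) (hξ : ‖ξ‖ = 1) (x : B H) (hx : x.IsPositive) (F : Finset ι) :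
    ((∑ i ∈ F, star (Q.w e i ξ) * (x * Q.w e i ξ)) + ((‖x‖ : ℝ) : ℂ) •
      (1 - ∑ i ∈ F, star (Q.w e i ξ) * Q.w e i ξ) - Q.sl ξ ξ (Q.Delta x)).IsPositive := by
  have hs : star x = x := hx.isSelfAdjoint
  apply isPos_of
  · rw [star_sub, Q.sl_Delta_star ξ x hs]
    simp [hs, mul_assoc]
  · intro ζ
    have h1 := Complex.hasSum_re (Q.sl_Delta_hasSum e ξ ζ x)
    have h2 := ((Q.w_norm e ξ hξ ζ).mul_left ‖x‖).sub h1
    have h3 := sum_le_hasSum F (fun i _ => by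
      have h4 := (norm_sub_pos x hs).re_inner_nonneg_right (Q.w e i ξ ζ)
      rw [_root_.sub_apply, inner_sub_right, _root_.smul_apply, inner_smul_right] at h4
      change 0 ≤ (_ * ⟪_, Q.w e i ξ ζ⟫ - _).re at h4
      rw [inner_self_norm, Complex.sub_re, ← Complex.ofReal_mul, Complex.ofReal_re] at h4
      exact h4) h2
    have h5 : ⟪ζ, ((∑ i ∈ F, star (Q.w e i ξ) * (x * Q.w e i ξ)) + ((‖x‖ : ℝ) : ℂ) •
      (1 - ∑ i ∈ F, star (Q.w e i ξ) * Q.w e i ξ) - Q.sl ξ ξ (Q.Delta x)) ζ⟫ =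
      (∑ i ∈ F, ⟪Q.w e i ξ ζ, x (Q.w e i ξ ζ)⟫) + ((‖x‖ : ℝ) : ℂ) * (((‖ζ‖ ^ 2 : ℝ) : ℂ) -
        ∑ i ∈ F, ((‖Q.w e i ξ ζ‖ ^ 2 : ℝ) : ℂ)) - ⟪ζ, Q.sl ξ ξ (Q.Delta x) ζ⟫ := by
      rw [_root_.sub_apply, inner_sub_right, _root_.add_apply, inner_add_right, _root_.smul_apply,
        inner_smul_right, _root_.sub_apply, inner_sub_right]
      congr 2
      · rw [ContinuousLinearMap.sum_apply, inner_sum]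
        refine Finset.sum_congr rfl fun i _ => ?_
        rw [mapp, mapp, inner_star_right]
      · congr 2
        · exact inner_self_norm ζ
        · rw [ContinuousLinearMap.sum_apply, inner_sum]
          refine Finset.sum_congr rfl fun i _ => ?_
          rw [mapp, inner_star_right, inner_self_norm]
    rw [h5, Complex.sub_re, Complex.add_re, Complex.re_ofReal_mul, Complex.sub_re, Complex.re_sum,
      Complex.re_sum]
    simp only [Complex.ofReal_re]
    rw [Finset.sum_sub_distrib, ← Finset.mul_sum] at h3
    linarith

end LCQG

namespace DiscreteKacQG
variable (Q : DiscreteKacQG H H2) (e : HilbertBasis ι ℂ H)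
variable {E : B H →ₗ[ℂ] B H}

theorem q_nonneg (ξ : H) (hξ : ‖ξ‖ = 1) (F : Finset ι) :
    (1 - ∑ i ∈ F, Q.w e i ξ * star (Q.w e i ξ)).IsPositive := by
  apply isPos_of
  · simp
  · intro ζ
    have h := Q.row_le e ξ hξ F ζ
    have h1 : ⟪ζ, (1 - ∑ i ∈ F, Q.w e i ξ * star (Q.w e i ξ)) ζ⟫ =
        ((‖ζ‖ ^ 2 - ∑ i ∈ F, ‖star (Q.w e i ξ) ζ‖ ^ 2 : ℝ) : ℂ) := by
      rw [_root_.sub_apply, inner_sub_right, Complex.ofReal_sub, Complex.ofReal_sum]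
      congr 1
      · exact LCQG.inner_self_norm ζ
      · rw [ContinuousLinearMap.sum_apply, inner_sum]
        refine Finset.sum_congr rfl fun i _ => ?_
        rw [mapp, ← inner_star_left, LCQG.inner_self_norm]
    rw [h1, Complex.ofReal_re]
    linarith

theorem inv_le (h : CE Q.Mhat E Q.phihat) (ξ : H) (hξ : ‖ξ‖ = 1) (x : B H) (hx : x.IsPositive) :
    (Q.phihat (E (Q.sl ξ ξ (Q.Delta x)))).re ≤ (Q.phihat (E x)).re := by
  obtain ⟨s, e, _⟩ := exists_hilbertBasis ℂ H
  have key : ∀ F : Finset s, (Q.phihat (E (Q.sl ξ ξ (Q.Delta x)))).re ≤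
      (Q.phihat (E x)).re + ‖x‖ * (1 - ∑ i ∈ F, ‖Q.w e i ξ Q.x0‖ ^ 2) := by
    intro F
    have h1 := h.m_pos _ (Q.dom e ξ hξ x hx F)
    have h2 := h.mul_pos x _ hx (sub_mem (one_mem Q.Mhat) (sum_mem fun i (_ : i ∈ F) =>
      mul_mem (Q.w_mem e i ξ) (star_mem (Q.w_mem e i ξ))))
      ((ContinuousLinearMap.nonneg_iff_isPositive _).mpr (Q.q_nonneg e ξ hξ F))
    have h3 : ∀ i ∈ F, Q.phihat (E (star (Q.w e i ξ) * (x * Q.w e i ξ))) =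
        Q.phihat (E (x * (Q.w e i ξ * star (Q.w e i ξ)))) := by
      intro i _
      rw [h.central _ _ (star_mem (Q.w_mem e i ξ)), mul_assoc]
    have h4 : ∀ i ∈ F, Q.phihat (E (star (Q.w e i ξ) * Q.w e i ξ)) =
        ((‖Q.w e i ξ Q.x0‖ ^ 2 : ℝ) : ℂ) := by
      intro i _
      have hm := mul_mem (star_mem (Q.w_mem e i ξ)) (Q.w_mem e i ξ)
      rw [h.ce.fixes _ hm, Q.ph_eq _ hm, mapp, inner_star_right, LCQG.inner_self_norm]
    rw [mul_sub, mul_one, map_sub, map_sub, Finset.mul_sum, map_sum, map_sum] at h2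
    rw [map_sub, map_sub, map_add, map_add, map_smul, map_smul, map_sub, map_sub, map_sum, map_sum,
      map_sum, map_sum, h.m_one, Finset.sum_congr rfl h3, Finset.sum_congr rfl h4] at h1
    have h5 := (Complex.le_def.mp (add_nonneg h1 h2)).1
    rw [Complex.add_re, Complex.sub_re, Complex.add_re, Complex.sub_re, smul_eq_mul,
      Complex.re_ofReal_mul, Complex.sub_re, ← Complex.ofReal_sum, Complex.ofReal_re,
      Complex.one_re, Complex.zero_re] at h5
    linarith
  have hw := Q.w_norm e ξ hξ Q.x0
  rw [x0_norm, one_pow] at hw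
  have ht : Filter.Tendsto (fun F : Finset s => (Q.phihat (E x)).re +
      ‖x‖ * (1 - ∑ i ∈ F, ‖Q.w e i ξ Q.x0‖ ^ 2)) Filter.atTop
      (nhds ((Q.phihat (E x)).re + ‖x‖ * (1 - 1))) :=
    ((tendsto_const_nhds.sub hw).const_mul _).const_add _
  have := ge_of_tendsto' ht key
  linarith

theorem inv_pos_eq (h : CE Q.Mhat E Q.phihat) (ξ : H) (hξ : ‖ξ‖ = 1) (x : B H)
    (hx : x.IsPositive) : Q.phihat (E (Q.sl ξ ξ (Q.Delta x))) = Q.phihat (E x) := by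
  have hs : star x = x := hx.isSelfAdjoint
  have h1 := Q.inv_le h ξ hξ x hx
  have h2 := Q.inv_le h ξ hξ _ (norm_sub_pos x hs)
  have h3 := Complex.le_def.mp (h.m_pos _ hx)
  have h4 := Complex.le_def.mp (h.m_pos _ (Q.sl_Delta_pos ξ x hx))
  rw [sub_eq_add_neg, ← neg_one_smul ℂ x, LCQG.sl_Delta_add, LCQG.sl_Delta_smul,
    LCQG.sl_Delta_smul, LCQG.sl_Delta_one, LCQG.inner_self_norm, hξ] at h2
  simp only [map_add, map_smul, h.m_one, smul_eq_mul, mul_one, one_pow, Complex.ofReal_one,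
    Complex.add_re, Complex.ofReal_re, neg_mul, one_mul, Complex.neg_re] at h2
  apply Complex.ext
  · linarith
  · rw [← h3.2, ← h4.2]

theorem inv_unit (h : CE Q.Mhat E Q.phihat) (ξ : H) (hξ : ‖ξ‖ = 1) (x : B H) :
    Q.phihat (E (Q.sl ξ ξ (Q.Delta x))) = Q.phihat (E x) := by
  have hsa : ∀ y : B H, star y = y →
      Q.phihat (E (Q.sl ξ ξ (Q.Delta y))) = Q.phihat (E y) := by
    intro y hy
    have h1 := Q.inv_pos_eq h ξ hξ _ (norm_sub_pos y hy)
    rw [sub_eq_add_neg, ← neg_one_smul ℂ y, LCQG.sl_Delta_add, LCQG.sl_Delta_smul,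
      LCQG.sl_Delta_smul, LCQG.sl_Delta_one, LCQG.inner_self_norm, hξ] at h1
    simp only [map_add, map_smul, h.m_one, smul_eq_mul, mul_one, one_pow, Complex.ofReal_one,
      neg_mul, one_mul] at h1
    simpa using h1
  have h1 := hsa _ (realPart x).2
  have h2 := hsa _ (imaginaryPart x).2
  have h3 := realPart_add_I_smul_imaginaryPart x
  rw [← h3, LCQG.sl_Delta_add, LCQG.sl_Delta_smul, map_add, map_add, map_smul, map_smul, h1, h2,
    map_add, map_add, map_smul, map_smul]

theorem inv_diag (h : CE Q.Mhat E Q.phihat) (ξ : H) (x : B H) :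
    Q.phihat (E (Q.sl ξ ξ (Q.Delta x))) = ⟪ξ, ξ⟫ * Q.phihat (E x) := by
  by_cases h0 : ξ = 0
  · have : Q.sl ξ ξ (Q.Delta x) = 0 := by
      have := Q.sl_smul_left 0 ξ ξ (Q.Delta x)
      rw [zero_smul, zero_smul] at this
      rw [h0] at this ⊢
      exact this
    rw [this, h0]
    simp
  · have hn : ‖ξ‖ ≠ 0 := norm_ne_zero_iff.mpr h0
    have hu : ‖((‖ξ‖⁻¹ : ℝ) : ℂ) • ξ‖ = 1 := by
      rw [norm_smul]
      simp [hn]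
    have he : ξ = ((‖ξ‖ : ℝ) : ℂ) • (((‖ξ‖⁻¹ : ℝ) : ℂ) • ξ) := by
      rw [smul_smul, ← Complex.ofReal_mul, mul_inv_cancel₀ hn, Complex.ofReal_one, one_smul]
    have h1 := Q.inv_unit h _ hu x
    set c : ℂ := ((‖ξ‖ : ℝ) : ℂ) with hc
    set u := ((‖ξ‖⁻¹ : ℝ) : ℂ) • ξ with hu'
    have h2 : Q.sl ξ ξ (Q.Delta x) = (c * c) • Q.sl u u (Q.Delta x) := by
      conv_lhs => rw [he]
      rw [LCQG.sl_smul_left, LCQG.sl_smul_right, smul_smul, hc, Complex.conj_ofReal]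
    rw [h2, map_smul, map_smul, h1, LCQG.inner_self_norm, smul_eq_mul, hc]
    push_cast
    ring

theorem inv_vec (h : CE Q.Mhat E Q.phihat) (ξ η : H) (x : B H) :
    Q.phihat (E (Q.sl ξ η (Q.Delta x))) = ⟪η, ξ⟫ * Q.phihat (E x) := by
  have h1 := Q.inv_diag h ξ x
  have h2 := Q.inv_diag h η x
  have h3 := Q.inv_diag h (ξ + η) x
  have h4 := Q.inv_diag h (ξ + Complex.I • η) x
  simp only [LCQG.sl_add_left, LCQG.sl_add_right, LCQG.sl_smul_left, LCQG.sl_smul_right, map_add,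
    map_smul, inner_add_left, inner_add_right, inner_smul_left, inner_smul_right, smul_eq_mul,
    Complex.conj_I, h1, h2] at h3 h4
  have hI : Complex.I * Complex.I = -1 := Complex.I_mul_I
  linear_combination (1 / 2) * h3 + (Complex.I / 2) * h4 +
    (1 / 2) * (Q.phihat (E (Q.sl ξ η (Q.Delta x))) - ⟪η, ξ⟫ * Q.phihat (E x) +
      ⟪ξ, η⟫ * Q.phihat (E x) - Q.phihat (E (Q.sl η ξ (Q.Delta x)))) * hI

end DiscreteKacQG

theorem main_thm (Q : DiscreteKacQG H H2) (hinj : IsInjectiveVNA H Q.Mhat) :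
    Q.toLCQG.Amenable := by
  obtain ⟨E, hE⟩ := hinj
  have h : CE Q.Mhat E Q.phihat := ⟨hE, Q.phihat_state, Q.phihat_tracial⟩
  refine ⟨Q.phihat ∘ₗ E, ⟨h.m_one, fun x _ hx => h.m_pos x hx⟩, ?_⟩
  rintro x - ω ⟨ξ, η, h1, h2, h3⟩
  have hs := Q.sliceL_hasSum ω h1 h2 h3 (Q.Delta x)
  have hs2 := ((Q.phihat ∘ₗ E).mkContinuous 2 h.m_bd).hasSum hs
  refine hs2.unique ?_
  have h4 := (h3 1).mul_right (Q.phihat (E x))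
  change HasSum (fun n => Q.phihat (E (Q.sl (ξ n) (η n) (Q.Delta x)))) _
  simp only [Q.inv_vec h]
  exact h4

end TensorI

/-- If `𝔾` is a discrete quantum group of Kac type and `L∞(𝔾̂)` is an injective von
Neumann algebra, then `𝔾` is amenable. -/
theorem injective_dual_implies_amenable (Q : DiscreteKacQG H H2)
    (hinj : IsInjectiveVNA H Q.Mhat) :
    Q.toLCQG.Amenable := by
  exact main_thm Q hinj

end LCQGNote
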